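/- Let 1 < p < ∞ and let f ∈ L^p([0,1]²) satisfy I_p(f) < ∞. Then there exist a continuous function g ∈ H_p^{(2)} and univariate functions φ₁, φ₂ such that f(x,y) = g(x,y) + φ₁(x) + φ₂(y) for almost every (x,y) ∈ ℝ², and there is an absolute constant A > 0 (independent of p and f) with v_p^{(2)}(g) ≤ A[ω(f;1,1)_p + (1/(p·p'))·K_p(f) + (1/(p·p'))²·I_p(f)]. Moreover, if f ∈ L^p_0([0,1]²), then one may take φ₁ = φ₂ = 0. -/

import Mathlib

open MeasureTheory Filter Set
open scoped ENNReal

noncomputable section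

/-- A function of two real variables that is 1-periodic in each variable. -/
def BiPeriodic (f : ℝ → ℝ → ℝ) : Prop :=
  (∀ x y, f (x + 1) y = f x y) ∧ (∀ x y, f x (y + 1) = f x y)

/-- A 1-periodic function of one real variable. -/
def Periodic1 (g : ℝ → ℝ) : Prop := ∀ x, g (x + 1) = g x

/-- The `L^p` norm of a function over `[0,1]^2` (as a value in `[0,∞]`). -/
noncomputable def lpNorm2 (p : ℝ) (f : ℝ → ℝ → ℝ) : ℝ≥0∞ :=
  (∫⁻ x in Set.Icc (0:ℝ) 1, ∫⁻ y in Set.Icc (0:ℝ) 1,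
      ENNReal.ofReal (|f x y| ^ p)) ^ (1 / p)

/-- The `L^p` norm of a function over `[0,1]` (as a value in `[0,∞]`). -/
noncomputable def lpNorm1 (p : ℝ) (g : ℝ → ℝ) : ℝ≥0∞ :=
  (∫⁻ x in Set.Icc (0:ℝ) 1, ENNReal.ofReal (|g x| ^ p)) ^ (1 / p)

/-- Membership in `L^p([0,1]^2)`: measurable, 1-periodic in each variable,
finite `L^p` norm. -/
def MemLp2 (p : ℝ) (f : ℝ → ℝ → ℝ) : Prop :=
  Measurable (Function.uncurry f) ∧ BiPeriodic f ∧ lpNorm2 p f < ⊤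

/-- Membership in `L^p([0,1])` for 1-periodic functions of one variable. -/
def MemLp1 (p : ℝ) (g : ℝ → ℝ) : Prop :=
  Measurable g ∧ Periodic1 g ∧ lpNorm1 p g < ⊤

/-- The (total) `L^p` modulus of continuity `ω(f;δ)_p` of a bivariate function. -/
noncomputable def modulus2 (p : ℝ) (f : ℝ → ℝ → ℝ) (δ : ℝ) : ℝ≥0∞ :=
  ⨆ (h : ℝ × ℝ) (_ : Real.sqrt (h.1 ^ 2 + h.2 ^ 2) ≤ δ),
    lpNorm2 p (fun x y => f (x + h.1) (y + h.2) - f x y)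

/-- The `L^p` modulus of continuity `ω(g;δ)_p` of a univariate function. -/
noncomputable def modulus1 (p : ℝ) (g : ℝ → ℝ) (δ : ℝ) : ℝ≥0∞ :=
  ⨆ (h : ℝ) (_ : h ∈ Set.Icc 0 δ), lpNorm1 p (fun x => g (x + h) - g x)

/-- The mixed `L^p` modulus of continuity `ω(f;u,v)_p`. -/
noncomputable def mixedModulus (p : ℝ) (f : ℝ → ℝ → ℝ) (u v : ℝ) : ℝ≥0∞ :=
  ⨆ (s : ℝ) (_ : s ∈ Set.Icc 0 u) (t : ℝ) (_ : t ∈ Set.Icc 0 v),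
    lpNorm2 p (fun x y => f (x + s) (y + t) - f (x + s) y - f x (y + t) + f x y)

/-- `J_p(f) = ∫₀¹ t^{-1/p} ω(f;t)_p dt/t`. -/
noncomputable def Jp (p : ℝ) (f : ℝ → ℝ → ℝ) : ℝ≥0∞ :=
  ∫⁻ t in Set.Ioc (0:ℝ) 1, ENNReal.ofReal (t ^ (-(1/p)) / t) * modulus2 p f t

/-- `K_p(f) = ∫₀¹ t^{-1/p} [ω(f;t,1)_p + ω(f;1,t)_p] dt/t`. -/
noncomputable def Kp (p : ℝ) (f : ℝ → ℝ → ℝ) : ℝ≥0∞ :=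
  ∫⁻ t in Set.Ioc (0:ℝ) 1,
    ENNReal.ofReal (t ^ (-(1/p)) / t) * (mixedModulus p f t 1 + mixedModulus p f 1 t)

/-- `I_p(f) = ∫₀¹∫₀¹ (uv)^{-1/p} ω(f;u,v)_p (du/u)(dv/v)`. -/
noncomputable def Ip (p : ℝ) (f : ℝ → ℝ → ℝ) : ℝ≥0∞ :=
  ∫⁻ u in Set.Ioc (0:ℝ) 1, ∫⁻ v in Set.Ioc (0:ℝ) 1,
    ENNReal.ofReal ((u * v) ^ (-(1/p)) / (u * v)) * mixedModulus p f u v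

/-- The essential supremum norm of `f` over `[0,1]^2`. -/
noncomputable def supNorm2 (f : ℝ → ℝ → ℝ) : ℝ≥0∞ :=
  essSup (fun z : ℝ × ℝ => ENNReal.ofReal |f z.1 z.2|)
    (volume.restrict ((Set.Icc (0:ℝ) 1) ×ˢ (Set.Icc (0:ℝ) 1)))

/-- The Wiener `p`-variation of a 1-periodic function `g`, as a value in `[0,∞]`:
the supremum over partitions `x₀ < x₁ < ... < xₙ = x₀ + 1` of
`(∑ |g(x_{k+1}) - g(x_k)|^p)^{1/p}`. -/
noncomputable def vp (p : ℝ) (g : ℝ → ℝ) : ℝ≥0∞ :=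
  ⨆ (n : ℕ) (x : ℕ → ℝ) (_ : ∀ i < n, x i < x (i + 1)) (_ : x n = x 0 + 1),
    ENNReal.ofReal ((∑ k ∈ Finset.range n, |g (x (k + 1)) - g (x k)| ^ p) ^ (1 / p))

/-- The Hardy–Vitali type total `p`-variation of a bivariate function,
as a value in `[0,∞]`: the supremum over nets of
`(∑∑ |Δf(x_i,y_j)|^p)^{1/p}`. -/
noncomputable def vp2 (p : ℝ) (f : ℝ → ℝ → ℝ) : ℝ≥0∞ :=
  ⨆ (m : ℕ) (n : ℕ) (x : ℕ → ℝ) (y : ℕ → ℝ)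
    (_ : ∀ i < m, x i < x (i + 1)) (_ : x m = x 0 + 1)
    (_ : ∀ j < n, y j < y (j + 1)) (_ : y n = y 0 + 1),
    ENNReal.ofReal ((∑ i ∈ Finset.range m, ∑ j ∈ Finset.range n,
      |f (x (i + 1)) (y (j + 1)) - f (x (i + 1)) (y j)
        - f (x i) (y (j + 1)) + f (x i) (y j)| ^ p) ^ (1 / p))

/-- Membership in the Hardy class `H_p^{(2)}`: finite Vitali `p`-variation and
all linear sections of bounded `p`-variation. -/
def MemHp2 (p : ℝ) (f : ℝ → ℝ → ℝ) : Prop :=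
  vp2 p f < ⊤ ∧ (∀ x, vp p (fun y => f x y) < ⊤) ∧ (∀ y, vp p (fun x => f x y) < ⊤)

/-- Membership in the mixed norm class `V_p[V_p]`: all sections have bounded
`p`-variation and the functions `x ↦ v_p(f_x)`, `y ↦ v_p(f_y)` are themselves
of bounded `p`-variation. -/
def MemVpVp (p : ℝ) (f : ℝ → ℝ → ℝ) : Prop :=
  (∀ x, vp p (fun y => f x y) < ⊤) ∧ (∀ y, vp p (fun x => f x y) < ⊤) ∧
  vp p (fun x => (vp p (fun y => f x y)).toReal) < ⊤ ∧
  vp p (fun y => (vp p (fun x => f x y)).toReal) < ⊤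

/-- `W_p(f) = v_p(φ_p[f]) + v_p(ψ_p[f])`, where `φ_p[f](x) = v_p(f_x)` and
`ψ_p[f](y) = v_p(f_y)`. -/
noncomputable def Wp (p : ℝ) (f : ℝ → ℝ → ℝ) : ℝ≥0∞ :=
  vp p (fun x => (vp p (fun y => f x y)).toReal)
    + vp p (fun y => (vp p (fun x => f x y)).toReal)

/-- Membership in `L^p_0([0,1]^2)`: membership in `L^p([0,1]^2)` together with
vanishing of the linear mean values `∫₀¹ f(x,t) dt` and `∫₀¹ f(t,y) dt` for a.e.
`x` resp. `y`. -/
def MemLp20 (p : ℝ) (f : ℝ → ℝ → ℝ) : Prop :=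
  MemLp2 p f ∧ (∀ᵐ x : ℝ ∂volume, ∫ t in (0:ℝ)..1, f x t = 0) ∧
    (∀ᵐ y : ℝ ∂volume, ∫ t in (0:ℝ)..1, f t y = 0)

/-- `T` is a trigonometric polynomial of degree `(n,m)` in two variables. -/
def IsTrigPoly2 (n m : ℕ) (T : ℝ → ℝ → ℝ) : Prop :=
  ∃ a b c d : ℕ → ℕ → ℝ, ∀ x y : ℝ,
    T x y = ∑ j ∈ Finset.range (n + 1), ∑ k ∈ Finset.range (m + 1),
      (a j k * Real.cos (2 * Real.pi * j * x) * Real.cos (2 * Real.pi * k * y)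
        + b j k * Real.cos (2 * Real.pi * j * x) * Real.sin (2 * Real.pi * k * y)
        + c j k * Real.sin (2 * Real.pi * j * x) * Real.cos (2 * Real.pi * k * y)
        + d j k * Real.sin (2 * Real.pi * j * x) * Real.sin (2 * Real.pi * k * y))

end

/-!
Let `S_h` denote averaging over an interval of length `h` and put `h_n = 2^{-pp'n}`. The function
`g` is the sum over all `n, m` of the differences `S_{h_{n+1}} - S_{h_n}`, taken in the first
variable, of the differences `S_{h_{m+1}} - S_{h_m}`, taken in the second. The partial sums
telescope, and by Lebesgue differentiation they converge almost everywhere to `f` minus its means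
over one period in each variable plus its double mean; so `g` is `f` up to one-variable functions.

A one-dimensional Sobolev inequality at a scale between `h_{n+1}` and `h_n`, applied in each
variable, bounds the `p`-variation of the term of index `(n, m)`, that of its sections and its
supremum by the sum of `(hk)^{-1/p} ω(f; h, k)_p` over `h ∈ {h_n, h_{n+1}}`, `k ∈ {h_m, h_{m+1}}`.
To sum these values, compare each with an integral over the tile `(h 2^{-p'}, h 2^p]` in each
variable whose scale is not `1`. Below `h` the bound `ω(h) ≤ (2h/u) ω(u)` yields a multiple of `p'`,
above `h` monotonicity yields a multiple of `p`, and `p + p' = pp'`. Consecutive tiles share an end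
point, whence `I_p`, `K_p` and the factors `1/(pp')`.
-/

section PowerMeans

variable {α : Type*} [MeasurableSpace α] {p : ℝ}

lemma rpow_lintegral_le (hp : 1 < p) (μ : Measure α) {F : α → ℝ≥0∞} (hF : AEMeasurable F μ) :
    (∫⁻ a, F a ∂μ) ^ p ≤ μ univ ^ (p - 1) * ∫⁻ a, F a ^ p ∂μ := by
  have hp0 : p ≠ 0 := by linarith
  have hp1 : p - 1 ≠ 0 := by linarith
  have holder := ENNReal.rpow_le_rpow (z := p) (ENNReal.lintegral_mul_le_Lp_mul_Lq μ
    (Real.HolderConjugate.conjExponent hp) hF (g := 1) aemeasurable_const) (by linarith)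
  have exponent_eq : (1 / p.conjExponent) * p = p - 1 := by
    unfold Real.conjExponent
    field_simp
  rw [ENNReal.mul_rpow_of_nonneg _ _ (by linarith), ← ENNReal.rpow_mul, ← ENNReal.rpow_mul,
    one_div_mul_cancel hp0, exponent_eq, ENNReal.rpow_one] at holder
  simpa [mul_comm] using holder

lemma rpow_lintegral_le_of_isProbabilityMeasure (hp : 1 < p) (μ : Measure α)
    [IsProbabilityMeasure μ] {F : α → ℝ≥0∞} (hF : AEMeasurable F μ) :
    (∫⁻ a, F a ∂μ) ^ p ≤ ∫⁻ a, F a ^ p ∂μ := by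
  simpa using rpow_lintegral_le hp μ hF

lemma rpow_setLIntegral_Ioc_le (hp : 1 < p) {F : ℝ → ℝ≥0∞} (hF : Measurable F) {a b h : ℝ}
    (hab : b ≤ a + h) :
    (∫⁻ r in Ioc a b, F r) ^ p ≤ ENNReal.ofReal h ^ (p - 1) * ∫⁻ r in Ioc a b, F r ^ p := by
  refine (rpow_lintegral_le hp _ hF.aemeasurable).trans ?_
  rw [Measure.restrict_apply_univ, Real.volume_Ioc]
  gcongr
  linarith

lemma enorm_sub_rpow_le (hp : 1 ≤ p) (a b : ℝ) :
    ‖a - b‖ₑ ^ p ≤ 2 ^ (p - 1) * (‖a‖ₑ ^ p + ‖b‖ₑ ^ p) :=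
  (ENNReal.rpow_le_rpow enorm_sub_le (by linarith)).trans
    (ENNReal.rpow_add_le_mul_rpow_add_rpow _ _ hp)

end PowerMeans

section LocalSobolev

/-- The window `(a, b]` as seen by `endDiff`: either an arbitrary interval together with the weight
`ε = 1`, for which `endDiff` is the increment over the window, or a full period together with
`ε = 0`, for which `endDiff` is the value at the right end. -/
def IsWindow (ε a b : ℝ) : Prop := (ε = 1 ∧ a ≤ b) ∨ (ε = 0 ∧ a + 1 = b)

/-- The increment `w b - w a` for `ε = 1`, the value `w b` for `ε = 0`. Treating the two together
gives variations, sections and sup norms by a single estimate. -/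
def endDiff (ε a b : ℝ) (w : ℝ → ℝ) : ℝ := w b - ε * w a

/-- The integrand of the scale-invariant Sobolev norm at scale `h` of a function `g` with
derivative `g'`. -/
noncomputable def sobolevDensity (p h : ℝ) (g g' : ℝ → ℝ) (r : ℝ) : ℝ≥0∞ :=
  ENNReal.ofReal h⁻¹ * ‖g r‖ₑ ^ p + ENNReal.ofReal h ^ (p - 1) * ‖g' r‖ₑ ^ p

variable {p h a b c ε : ℝ} {g g' : ℝ → ℝ}

lemma enorm_sub_le_lintegral_of_mem_Icc
    (hd : ∀ x y, x ≤ y → ‖g y - g x‖ₑ ≤ ∫⁻ r in Ioc x y, ‖g' r‖ₑ) {x y : ℝ}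
    (hx : x ∈ Icc a b) (hy : y ∈ Icc a b) : ‖g x - g y‖ₑ ≤ ∫⁻ r in Ioc a b, ‖g' r‖ₑ := by
  rcases le_total x y with hxy | hxy
  · rw [enorm_sub_rev]
    exact (hd x y hxy).trans (lintegral_mono_set (Ioc_subset_Ioc hx.1 hy.2))
  · exact (hd y x hxy).trans (lintegral_mono_set (Ioc_subset_Ioc hy.1 hx.2))

lemma enorm_rpow_le_lintegral_sobolevDensity (hp : 1 < p) (hg : Measurable g)
    (hg' : Measurable g') (hd : ∀ x y, x ≤ y → ‖g y - g x‖ₑ ≤ ∫⁻ r in Ioc x y, ‖g' r‖ₑ)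
    (hh : 0 < h) {x : ℝ} (hx : x ∈ Icc c (c + h)) :
    ‖g x‖ₑ ^ p ≤ 2 ^ (p - 1) * ∫⁻ r in Ioc c (c + h), sobolevDensity p h g g' r := by
  set I := ∫⁻ r in Ioc c (c + h), ‖g' r‖ₑ
  have pointwise : ∀ y ∈ Ioc c (c + h),
      ‖g x‖ₑ ^ p ≤ 2 ^ (p - 1) * (‖g y‖ₑ ^ p + I ^ p) := fun y hy ↦ by
    refine le_trans ?_ (ENNReal.rpow_add_le_mul_rpow_add_rpow _ _ hp.le)
    gcongr
    calc ‖g x‖ₑ = ‖g y + (g x - g y)‖ₑ := by rw [add_sub_cancel]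
      _ ≤ ‖g y‖ₑ + ‖g x - g y‖ₑ := enorm_add_le _ _
      _ ≤ ‖g y‖ₑ + I := by
        gcongr
        exact enorm_sub_le_lintegral_of_mem_Icc hd hx (Ioc_subset_Icc_self hy)
  have inv_mul : ENNReal.ofReal h⁻¹ * ENNReal.ofReal h = 1 := by
    rw [← ENNReal.ofReal_mul (by positivity), inv_mul_cancel₀ hh.ne', ENNReal.ofReal_one]
  have volume_eq : volume (Ioc c (c + h)) = ENNReal.ofReal h := by simp
  calc ‖g x‖ₑ ^ p = ENNReal.ofReal h⁻¹ * ∫⁻ _ in Ioc c (c + h), ‖g x‖ₑ ^ p := by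
        rw [setLIntegral_const, volume_eq, mul_left_comm, inv_mul, mul_one]
    _ ≤ ENNReal.ofReal h⁻¹ * ∫⁻ y in Ioc c (c + h), 2 ^ (p - 1) * (‖g y‖ₑ ^ p + I ^ p) := by
        gcongr 1
        exact setLIntegral_mono' measurableSet_Ioc pointwise
    _ = 2 ^ (p - 1) * (ENNReal.ofReal h⁻¹ * (∫⁻ y in Ioc c (c + h), ‖g y‖ₑ ^ p)
          + (ENNReal.ofReal h⁻¹ * ENNReal.ofReal h) * I ^ p) := by
        rw [lintegral_const_mul _ (by fun_prop), lintegral_add_right _ measurable_const,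
          setLIntegral_const, volume_eq]
        ring
    _ ≤ 2 ^ (p - 1) * (ENNReal.ofReal h⁻¹ * (∫⁻ y in Ioc c (c + h), ‖g y‖ₑ ^ p)
          + ENNReal.ofReal h ^ (p - 1) * ∫⁻ r in Ioc c (c + h), ‖g' r‖ₑ ^ p) := by
        rw [inv_mul, one_mul]
        gcongr
        exact rpow_setLIntegral_Ioc_le hp hg'.enorm le_rfl
    _ = 2 ^ (p - 1) * ∫⁻ r in Ioc c (c + h), sobolevDensity p h g g' r := by
        simp only [sobolevDensity]
        rw [lintegral_add_left (by fun_prop), lintegral_const_mul _ (by fun_prop),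
          lintegral_const_mul _ (by fun_prop)]

lemma enorm_rpow_ends_le_lintegral_sobolevDensity (hp : 1 < p) (hg : Measurable g)
    (hg' : Measurable g') (hd : ∀ x y, x ≤ y → ‖g y - g x‖ₑ ≤ ∫⁻ r in Ioc x y, ‖g' r‖ₑ)
    (hh : 0 < h) (hab : a + h ≤ b) :
    ‖g a‖ₑ ^ p ≤ 2 ^ (p - 1) * ∫⁻ r in Ioc a b, sobolevDensity p h g g' r ∧
      ‖g b‖ₑ ^ p ≤ 2 ^ (p - 1) * ∫⁻ r in Ioc a b, sobolevDensity p h g g' r := by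
  have le_of_mem (c x : ℝ) (hx : x ∈ Icc c (c + h)) (hac : a ≤ c) (hcb : c + h ≤ b) :
      ‖g x‖ₑ ^ p ≤ 2 ^ (p - 1) * ∫⁻ r in Ioc a b, sobolevDensity p h g g' r :=
    (enorm_rpow_le_lintegral_sobolevDensity hp hg hg' hd hh hx).trans
      (by gcongr)
  exact ⟨le_of_mem a a ⟨le_rfl, by linarith⟩ le_rfl hab,
    le_of_mem (b - h) b ⟨by linarith, by linarith⟩ (by linarith) (by linarith)⟩

lemma enorm_increment_rpow_le_lintegral_sobolevDensity (hp : 1 < p) (hg : Measurable g)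
    (hg' : Measurable g') (hd : ∀ x y, x ≤ y → ‖g y - g x‖ₑ ≤ ∫⁻ r in Ioc x y, ‖g' r‖ₑ)
    (hh : 0 < h) (hab : a ≤ b) :
    ‖g b - g a‖ₑ ^ p ≤ 4 ^ p * ∫⁻ r in Ioc a b, sobolevDensity p h g g' r := by
  have hp0 : 0 ≤ p := by linarith
  set R := ∫⁻ r in Ioc a b, sobolevDensity p h g g' r
  rcases le_total (a + h) b with long | short
  · obtain ⟨le_left, le_right⟩ :=
      enorm_rpow_ends_le_lintegral_sobolevDensity hp hg hg' hd hh long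
    have two_rpow_mul : (2 : ℝ≥0∞) ^ (p - 1) * 2 = 2 ^ p := by
      conv_lhs => rw [← ENNReal.rpow_one 2, ← ENNReal.rpow_mul,
        ← ENNReal.rpow_add _ _ (by simp) (by simp)]
      ring_nf
    calc ‖g b - g a‖ₑ ^ p ≤ 2 ^ (p - 1) * (‖g b‖ₑ ^ p + ‖g a‖ₑ ^ p) :=
          enorm_sub_rpow_le hp.le _ _
      _ ≤ 2 ^ (p - 1) * (2 ^ (p - 1) * R + 2 ^ (p - 1) * R) := by gcongr
      _ = 2 ^ (p - 1) * (2 ^ (p - 1) * 2) * R := by ring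
      _ ≤ 2 ^ p * 2 ^ p * R := by
          rw [two_rpow_mul]
          gcongr
          · norm_num
          · linarith
      _ = 4 ^ p * R := by rw [← ENNReal.mul_rpow_of_nonneg _ _ hp0]; norm_num
  · calc ‖g b - g a‖ₑ ^ p ≤ (∫⁻ r in Ioc a b, ‖g' r‖ₑ) ^ p :=
          ENNReal.rpow_le_rpow (hd a b hab) hp0
      _ ≤ ENNReal.ofReal h ^ (p - 1) * ∫⁻ r in Ioc a b, ‖g' r‖ₑ ^ p :=
          rpow_setLIntegral_Ioc_le hp hg'.enorm short
      _ = ∫⁻ r in Ioc a b, ENNReal.ofReal h ^ (p - 1) * ‖g' r‖ₑ ^ p :=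
          (lintegral_const_mul _ (by fun_prop)).symm
      _ ≤ R := lintegral_mono fun r ↦ le_add_self
      _ ≤ 4 ^ p * R := le_mul_of_one_le_left' (ENNReal.one_le_rpow (by norm_num) (by linarith))

lemma enorm_endDiff_rpow_le_lintegral_sobolevDensity (hp : 1 < p) (hg : Measurable g)
    (hg' : Measurable g') (hd : ∀ x y, x ≤ y → ‖g y - g x‖ₑ ≤ ∫⁻ r in Ioc x y, ‖g' r‖ₑ)
    (hh : 0 < h) (hh1 : h ≤ 1) (hw : IsWindow ε a b) :
    ‖endDiff ε a b g‖ₑ ^ p ≤ 4 ^ p * ∫⁻ r in Ioc a b, sobolevDensity p h g g' r := by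
  rcases hw with ⟨rfl, hab⟩ | ⟨rfl, rfl⟩
  · simpa only [endDiff, one_mul] using
      enorm_increment_rpow_le_lintegral_sobolevDensity hp hg hg' hd hh hab
  · rw [endDiff, zero_mul, sub_zero]
    refine (enorm_rpow_ends_le_lintegral_sobolevDensity hp hg hg' hd hh
      (by linarith)).2.trans ?_
    gcongr
    exact (ENNReal.rpow_le_rpow_of_exponent_le (by norm_num) (by linarith)).trans
      (ENNReal.rpow_le_rpow (by norm_num) (by linarith))

end LocalSobolev

section Steklov

/-- The uniform probability measure on `(0, h]`. -/
noncomputable def uniformMeasure (h : ℝ) : Measure ℝ :=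
  (ENNReal.ofReal h)⁻¹ • volume.restrict (Ioc 0 h)

/-- The Steklov average of `w` over `(x, x + h]`. -/
noncomputable def steklov (h : ℝ) (w : ℝ → ℝ) (x : ℝ) : ℝ := ∫ s, w (x + s) ∂uniformMeasure h

/-- The measure `h⁻¹ (uniformMeasure h + δ_h)` on the increments that enter both a Steklov average
with step `h` (its uniform part) and the derivative of that average (its atom). -/
noncomputable def stepMeasure (h : ℝ) : Measure ℝ :=
  (ENNReal.ofReal h)⁻¹ • (uniformMeasure h + Measure.dirac h)

instance sFinite_uniformMeasure (h : ℝ) : SFinite (uniformMeasure h) := by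
  unfold uniformMeasure
  infer_instance

instance sFinite_stepMeasure (h : ℝ) : SFinite (stepMeasure h) := by
  unfold stepMeasure
  infer_instance

variable {p h : ℝ} {w : ℝ → ℝ}

lemma isProbabilityMeasure_uniformMeasure (hh : 0 < h) :
    IsProbabilityMeasure (uniformMeasure h) := by
  constructor
  simp only [uniformMeasure, Measure.smul_apply, Measure.restrict_apply_univ, Real.volume_Ioc,
    sub_zero, smul_eq_mul]
  exact ENNReal.inv_mul_cancel (by simpa using hh) (by simp)

lemma stepMeasure_univ (hh : 0 < h) : stepMeasure h univ = 2 * ENNReal.ofReal h⁻¹ := by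
  have := isProbabilityMeasure_uniformMeasure hh
  simp only [stepMeasure, Measure.smul_apply, Measure.add_apply, measure_univ, smul_eq_mul,
    one_add_one_eq_two, ENNReal.ofReal_inv_of_pos hh, mul_comm]

lemma ae_stepMeasure_mem_Icc (hh : 0 < h) : ∀ᵐ s ∂stepMeasure h, s ∈ Icc 0 h := by
  refine Measure.ae_smul_measure (ae_add_measure_iff.2 ⟨Measure.ae_smul_measure ?_ _, ?_⟩) _
  · filter_upwards [ae_restrict_mem measurableSet_Ioc] with s hs using Ioc_subset_Icc_self hs
  · exact (ae_dirac_iff measurableSet_Icc).2 ⟨hh.le, le_rfl⟩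

lemma lintegral_stepMeasure (hh : 0 < h) (F : ℝ → ℝ≥0∞) :
    ∫⁻ s, F s ∂stepMeasure h = ENNReal.ofReal h⁻¹ * (∫⁻ s, F s ∂uniformMeasure h + F h) := by
  rw [stepMeasure, lintegral_smul_measure, lintegral_add_measure, lintegral_dirac, smul_eq_mul,
    ENNReal.ofReal_inv_of_pos hh]

lemma integral_uniformMeasure (hh : 0 ≤ h) (w : ℝ → ℝ) :
    ∫ s, w s ∂uniformMeasure h = h⁻¹ * ∫ s in (0:ℝ)..h, w s := by
  rw [uniformMeasure, integral_smul_measure, intervalIntegral.integral_of_le hh]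
  simp [hh]

lemma intervalIntegrable_of_locallyIntegrable (hw : LocallyIntegrable w) (a b : ℝ) :
    IntervalIntegrable w volume a b :=
  (hw.integrableOn_isCompact isCompact_uIcc).intervalIntegrable

lemma intervalIntegrable_comp_add_right (hw : LocallyIntegrable w) (a b c : ℝ) :
    IntervalIntegrable (fun s ↦ w (s + c)) volume a b := by
  simpa using (intervalIntegrable_of_locallyIntegrable hw (a + c) (b + c)).comp_add_right c

lemma integrable_uniformMeasure_comp_add (hw : LocallyIntegrable w) (hh : 0 < h) (x : ℝ) :
    Integrable (fun s ↦ w (x + s)) (uniformMeasure h) := by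
  refine Integrable.smul_measure ?_ (by simpa using hh)
  exact (by simpa only [add_comm] using intervalIntegrable_comp_add_right hw 0 h x :
    IntervalIntegrable (fun s ↦ w (x + s)) volume 0 h).1

lemma measurable_steklov (hw : Measurable w) : Measurable (steklov h w) :=
  ((hw.comp (measurable_fst.add measurable_snd)).stronglyMeasurable.integral_prod_right').measurable

lemma enorm_steklov_sub_rpow_le (hp : 1 < p) (hwm : Measurable w) (hw : LocallyIntegrable w)
    (hh : 0 < h) (x : ℝ) :
    ‖steklov h w x - w x‖ₑ ^ p ≤ ∫⁻ s, ‖w (x + s) - w x‖ₑ ^ p ∂uniformMeasure h := by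
  have := isProbabilityMeasure_uniformMeasure hh
  have eq_integral : steklov h w x - w x = ∫ s, (w (x + s) - w x) ∂uniformMeasure h := by
    rw [integral_sub (integrable_uniformMeasure_comp_add hw hh x) (integrable_const _)]
    simp [steklov]
  calc ‖steklov h w x - w x‖ₑ ^ p
      ≤ (∫⁻ s, ‖w (x + s) - w x‖ₑ ∂uniformMeasure h) ^ p := by
        rw [eq_integral]
        exact ENNReal.rpow_le_rpow (enorm_integral_le_lintegral_enorm _) (by linarith)
    _ ≤ ∫⁻ s, ‖w (x + s) - w x‖ₑ ^ p ∂uniformMeasure h :=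
        rpow_lintegral_le_of_isProbabilityMeasure hp _ (by fun_prop)

lemma steklov_sub_eq_intervalIntegral (hw : LocallyIntegrable w) (hh : 0 ≤ h) (x y : ℝ) :
    steklov h w y - steklov h w x = ∫ r in x..y, h⁻¹ * (w (r + h) - w r) := by
  have intervalIntegrable := intervalIntegrable_of_locallyIntegrable hw
  rw [steklov, steklov, integral_uniformMeasure hh, integral_uniformMeasure hh,
    intervalIntegral.integral_const_mul, intervalIntegral.integral_sub
      (intervalIntegrable_comp_add_right hw x y h) (intervalIntegrable x y), ← mul_sub]
  simp only [intervalIntegral.integral_comp_add_left, intervalIntegral.integral_comp_add_right,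
    add_zero]
  have via_y := intervalIntegral.integral_add_adjacent_intervals
    (intervalIntegrable x y) (intervalIntegrable y (y + h))
  have via_x_add := intervalIntegral.integral_add_adjacent_intervals
    (intervalIntegrable x (x + h)) (intervalIntegrable (x + h) (y + h))
  congr 1
  linarith

lemma sobolevDensity_steklov_sub_le (hp : 1 < p) (hwm : Measurable w) (hw : LocallyIntegrable w)
    (hh : 0 < h) {η : ℝ} (le_η : h * 2 ^ (-p) ≤ η) (η_le : η ≤ h * 2 ^ (p / (p - 1))) (x : ℝ) :
    sobolevDensity p η (fun r ↦ steklov h w r - w r) (fun r ↦ h⁻¹ * (w (r + h) - w r)) x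
      ≤ 2 ^ p * ∫⁻ s, ‖w (x + s) - w x‖ₑ ^ p ∂stepMeasure h := by
  have hp1 : p - 1 ≠ 0 := by linarith
  have hη : 0 < η := lt_of_lt_of_le (by positivity) le_η
  have two_rpow : (2 : ℝ≥0∞) ^ p = ENNReal.ofReal (2 ^ p) := by
    rw [← ENNReal.ofReal_rpow_of_pos (by norm_num), ENNReal.ofReal_ofNat]
  have inv_η_le : ENNReal.ofReal η⁻¹ ≤ 2 ^ p * ENNReal.ofReal h⁻¹ := by
    rw [two_rpow, ← ENNReal.ofReal_mul (by positivity)]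
    refine ENNReal.ofReal_le_ofReal ((inv_anti₀ (by positivity) le_η).trans_eq ?_)
    rw [mul_inv, Real.rpow_neg (by norm_num), inv_inv, mul_comm]
  have rpow_η_le : ENNReal.ofReal η ^ (p - 1) * ENNReal.ofReal h⁻¹ ^ p
      ≤ 2 ^ p * ENNReal.ofReal h⁻¹ := by
    rw [two_rpow, ENNReal.ofReal_rpow_of_pos hη, ENNReal.ofReal_rpow_of_pos (by positivity),
      ← ENNReal.ofReal_mul (by positivity), ← ENNReal.ofReal_mul (by positivity)]
    refine ENNReal.ofReal_le_ofReal ?_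
    calc η ^ (p - 1) * h⁻¹ ^ p ≤ (h * 2 ^ (p / (p - 1))) ^ (p - 1) * h⁻¹ ^ p := by
          gcongr
      _ = 2 ^ p * h⁻¹ := by
          rw [Real.mul_rpow hh.le (by positivity), ← Real.rpow_mul (by norm_num),
            div_mul_cancel₀ _ hp1, Real.inv_rpow hh.le, Real.rpow_sub_one hh.ne']
          field_simp
  rw [lintegral_stepMeasure hh]
  calc ENNReal.ofReal η⁻¹ * ‖steklov h w x - w x‖ₑ ^ p
        + ENNReal.ofReal η ^ (p - 1) * ‖h⁻¹ * (w (x + h) - w x)‖ₑ ^ p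
      = ENNReal.ofReal η⁻¹ * ‖steklov h w x - w x‖ₑ ^ p
        + ENNReal.ofReal η ^ (p - 1) * ENNReal.ofReal h⁻¹ ^ p * ‖w (x + h) - w x‖ₑ ^ p := by
        rw [enorm_mul, ENNReal.mul_rpow_of_nonneg _ _ (by linarith),
          Real.enorm_eq_ofReal (inv_nonneg.2 hh.le), mul_assoc]
    _ ≤ 2 ^ p * ENNReal.ofReal h⁻¹ * ∫⁻ s, ‖w (x + s) - w x‖ₑ ^ p ∂uniformMeasure h
        + 2 ^ p * ENNReal.ofReal h⁻¹ * ‖w (x + h) - w x‖ₑ ^ p := by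
        gcongr
        exact enorm_steklov_sub_rpow_le hp hwm hw hh x
    _ = _ := by ring

end Steklov

section SteklovDiff

/-- The scales `2^{-pp'n}`; the exponent `pp' = p + p'` makes the tiles `[h 2^{-p}, h 2^{p'}]`
around consecutive scales share an end point. -/
noncomputable def steklovScale (p : ℝ) (n : ℕ) : ℝ := 2 ^ (-(p * (p / (p - 1))) * n)

/-- The difference of the Steklov averages at the scales of index `n + 1` and `n`. -/
noncomputable def steklovDiff (p : ℝ) (n : ℕ) (w : ℝ → ℝ) (x : ℝ) : ℝ :=
  steklov (steklovScale p (n + 1)) w x - steklov (steklovScale p n) w x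

/-- The sum of the step measures of the two scales that enter `steklovDiff p n`. -/
noncomputable def scaleMeasure (p : ℝ) (n : ℕ) : Measure ℝ :=
  stepMeasure (steklovScale p n) + stepMeasure (steklovScale p (n + 1))

instance sFinite_scaleMeasure (p : ℝ) (n : ℕ) : SFinite (scaleMeasure p n) := by
  unfold scaleMeasure
  infer_instance

variable {p : ℝ} {w : ℝ → ℝ}

lemma steklovScale_pos (p : ℝ) (n : ℕ) : 0 < steklovScale p n := by
  unfold steklovScale
  positivity

lemma steklovScale_zero (p : ℝ) : steklovScale p 0 = 1 := by simp [steklovScale]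

lemma steklovScale_succ (p : ℝ) (n : ℕ) :
    steklovScale p (n + 1) = steklovScale p n * 2 ^ (-(p * (p / (p - 1)))) := by
  rw [steklovScale, steklovScale, ← Real.rpow_add (by norm_num)]
  push_cast
  ring_nf

lemma steklovScale_succ_mul (hp : 1 < p) (n : ℕ) :
    steklovScale p (n + 1) * 2 ^ (p / (p - 1)) = steklovScale p n * 2 ^ (-p) := by
  have hp1 : p - 1 ≠ 0 := by linarith
  rw [steklovScale_succ, mul_assoc, ← Real.rpow_add (by norm_num)]
  congr 2
  field_simp
  ring

lemma steklovScale_le_one (hp : 1 < p) (n : ℕ) : steklovScale p n ≤ 1 := by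
  have : 0 < p - 1 := by linarith
  refine Real.rpow_le_one_of_one_le_of_nonpos (by norm_num) ?_
  rw [neg_mul, neg_nonpos]
  positivity

lemma measurable_steklovDiff (hw : Measurable w) (n : ℕ) : Measurable (steklovDiff p n w) :=
  (measurable_steklov hw).sub (measurable_steklov hw)

lemma enorm_steklovDiff_sub_le_lintegral (hw : LocallyIntegrable w) (n : ℕ) {x y : ℝ}
    (hxy : x ≤ y) :
    ‖steklovDiff p n w y - steklovDiff p n w x‖ₑ ≤ ∫⁻ r in Ioc x y,
      ‖(steklovScale p (n + 1))⁻¹ * (w (r + steklovScale p (n + 1)) - w r)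
        - (steklovScale p n)⁻¹ * (w (r + steklovScale p n) - w r)‖ₑ := by
  have intervalIntegrable (h : ℝ) :
      IntervalIntegrable (fun r ↦ h⁻¹ * (w (r + h) - w r)) volume x y :=
    ((intervalIntegrable_comp_add_right hw x y h).sub
      (intervalIntegrable_of_locallyIntegrable hw x y)).const_mul _
  have eq_integral : steklovDiff p n w y - steklovDiff p n w x = ∫ r in x..y,
      ((steklovScale p (n + 1))⁻¹ * (w (r + steklovScale p (n + 1)) - w r)
        - (steklovScale p n)⁻¹ * (w (r + steklovScale p n) - w r)) := by
    rw [intervalIntegral.integral_sub (intervalIntegrable _) (intervalIntegrable _),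
      ← steklov_sub_eq_intervalIntegral hw (steklovScale_pos p _).le,
      ← steklov_sub_eq_intervalIntegral hw (steklovScale_pos p _).le, steklovDiff, steklovDiff]
    ring
  rw [eq_integral, intervalIntegral.integral_of_le hxy]
  exact enorm_integral_le_lintegral_enorm _

lemma sobolevDensity_sub_le (hp : 1 ≤ p) (η : ℝ) (u u' v v' : ℝ → ℝ) (r : ℝ) :
    sobolevDensity p η (fun r ↦ u r - v r) (fun r ↦ u' r - v' r) r
      ≤ 2 ^ p * (sobolevDensity p η u u' r + sobolevDensity p η v v' r) := by
  have sub_rpow_le (a b : ℝ) : ‖a - b‖ₑ ^ p ≤ 2 ^ p * (‖a‖ₑ ^ p + ‖b‖ₑ ^ p) :=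
    (enorm_sub_rpow_le hp a b).trans (by gcongr <;> [norm_num; linarith])
  simp only [sobolevDensity]
  calc _ ≤ ENNReal.ofReal η⁻¹ * (2 ^ p * (‖u r‖ₑ ^ p + ‖v r‖ₑ ^ p))
        + ENNReal.ofReal η ^ (p - 1) * (2 ^ p * (‖u' r‖ₑ ^ p + ‖v' r‖ₑ ^ p)) := by
        gcongr <;> exact sub_rpow_le _ _
    _ = _ := by ring

lemma sobolevDensity_steklovDiff_le (hp : 1 < p) (hwm : Measurable w) (hw : LocallyIntegrable w)
    (n : ℕ) (x : ℝ) :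
    sobolevDensity p (steklovScale p n * 2 ^ (-p)) (steklovDiff p n w)
      (fun r ↦ (steklovScale p (n + 1))⁻¹ * (w (r + steklovScale p (n + 1)) - w r)
        - (steklovScale p n)⁻¹ * (w (r + steklovScale p n) - w r)) x
      ≤ 4 ^ p * ∫⁻ s, ‖w (x + s) - w x‖ₑ ^ p ∂scaleMeasure p n := by
  have : 0 < p - 1 := by linarith
  have two_rpow_mul : (2 : ℝ≥0∞) ^ p * 2 ^ p = 4 ^ p := by
    rw [← ENNReal.mul_rpow_of_nonneg _ _ (by linarith)]
    norm_num
  have tile_le (m : ℕ) :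
      steklovScale p m * 2 ^ (-p) ≤ steklovScale p m * 2 ^ (p / (p - 1)) := by
    have := (steklovScale_pos p m).le
    gcongr
    · norm_num
    · exact (neg_nonpos.2 (by linarith)).trans (by positivity)
  have eq : steklovDiff p n w = fun r ↦
      (steklov (steklovScale p (n + 1)) w r - w r) - (steklov (steklovScale p n) w r - w r) :=
    funext fun r ↦ by rw [sub_sub_sub_cancel_right, steklovDiff]
  rw [eq, scaleMeasure, lintegral_add_measure, ← two_rpow_mul, mul_assoc, add_comm (lintegral _ _),
    mul_add]
  refine (sobolevDensity_sub_le hp.le _ _ _ _ _ x).trans ?_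
  gcongr
  · exact sobolevDensity_steklov_sub_le hp hwm hw (steklovScale_pos p _)
      ((tile_le _).trans_eq (steklovScale_succ_mul hp n)) (steklovScale_succ_mul hp n).ge x
  · exact sobolevDensity_steklov_sub_le hp hwm hw (steklovScale_pos p _) le_rfl (tile_le _) x

lemma enorm_endDiff_steklovDiff_rpow_le (hp : 1 < p) (hwm : Measurable w)
    (hw : LocallyIntegrable w) (n : ℕ) {ε a b : ℝ} (hab : IsWindow ε a b) :
    ‖endDiff ε a b (steklovDiff p n w)‖ₑ ^ p
      ≤ 16 ^ p * ∫⁻ x in Ioc a b, ∫⁻ s, ‖w (x + s) - w x‖ₑ ^ p ∂scaleMeasure p n := by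
  have scale_pos : 0 < steklovScale p n * 2 ^ (-p) :=
    mul_pos (steklovScale_pos p n) (by positivity)
  have scale_le_one : steklovScale p n * 2 ^ (-p) ≤ 1 :=
    mul_le_one₀ (steklovScale_le_one hp n) (by positivity)
      (Real.rpow_le_one_of_one_le_of_nonpos (by norm_num) (by linarith))
  refine (enorm_endDiff_rpow_le_lintegral_sobolevDensity hp (measurable_steklovDiff hwm n)
    (by fun_prop) (fun x y ↦ enorm_steklovDiff_sub_le_lintegral hw n)
    scale_pos scale_le_one hab).trans ?_
  refine (mul_le_mul_right
    (lintegral_mono (sobolevDensity_steklovDiff_le hp hwm hw n)) _).trans_eq ?_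
  rw [lintegral_const_mul' _ _ (by finiteness), ← mul_assoc,
    ← ENNReal.mul_rpow_of_nonneg _ _ (by linarith)]
  norm_num

end SteklovDiff

section LocallyIntegrable

variable {f : ℝ → ℝ → ℝ} {k : ℝ}

lemma ae_ae_comp_add_of_ae {P : ℝ → Prop} (hP : ∀ᵐ x, P x) (σ : Measure ℝ) [SFinite σ] :
    ∀ᵐ x, ∀ᵐ s ∂σ, P (x + s) := by
  have quasi : Measure.QuasiMeasurePreserving (fun z : ℝ × ℝ ↦ z.1 + z.2)
      (volume.prod σ) volume :=
    QuasiMeasurePreserving.prod_of_left (by fun_prop)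
      (Eventually.of_forall fun s ↦ (measurePreserving_add_right volume s).quasiMeasurePreserving)
  exact Measure.ae_ae_of_ae_prod (quasi.ae hP)

lemma integrable_comp_add_restrict_prod_restrict
    (hf : LocallyIntegrable (Function.uncurry f)) (x y a b c d : ℝ) :
    Integrable (fun z : ℝ × ℝ ↦ f (x + z.1) (y + z.2))
      ((volume.restrict (Ioc a b)).prod (volume.restrict (Ioc c d))) := by
  have translate := measurePreserving_add_left (volume : Measure (ℝ × ℝ)) (x, y)
  have compact : IsCompact (((x, y) + ·) '' (Icc a b ×ˢ Icc c d)) :=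
    (isCompact_Icc.prod isCompact_Icc).image (continuous_const.add continuous_id)
  have integrableOn : IntegrableOn (Function.uncurry f ∘ ((x, y) + ·)) (Icc a b ×ˢ Icc c d) := by
    rw [← preimage_image_eq (Icc a b ×ˢ Icc c d) (add_right_injective (x, y)),
      translate.integrableOn_comp_preimage (MeasurableEquiv.addLeft (x, y)).measurableEmbedding]
    exact hf.integrableOn_isCompact compact
  rw [Measure.prod_restrict]
  exact integrableOn.mono_set (prod_mono Ioc_subset_Icc_self Ioc_subset_Icc_self)

lemma ae_locallyIntegrable_section (hf : LocallyIntegrable (Function.uncurry f)) :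
    ∀ᵐ x, LocallyIntegrable (f x) := by
  have on_boxes : ∀ᵐ x, ∀ n : ℕ, x ∈ Ioc (-n : ℝ) n → IntegrableOn (f x) (Ioc (-n : ℝ) n) := by
    refine ae_all_iff.2 fun n ↦ (ae_restrict_iff' measurableSet_Ioc).1 ?_
    have integrable := integrable_comp_add_restrict_prod_restrict hf 0 0 (-n) n (-n) n
    simp only [zero_add] at integrable
    exact integrable.prod_right_ae
  filter_upwards [on_boxes] with x hx
  refine locallyIntegrable_iff.2 fun K hK ↦ ?_
  obtain ⟨R, hR⟩ := hK.isBounded.subset_closedBall 0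
  obtain ⟨n, hn⟩ := exists_nat_gt (max |x| R)
  obtain ⟨hxn, hRn⟩ := max_lt_iff.1 hn
  refine (hx n ⟨(abs_lt.1 hxn).1, (abs_lt.1 hxn).2.le⟩).mono_set (hR.trans ?_)
  rw [Real.closedBall_eq_Icc]
  exact fun y hy ↦ ⟨by linarith [hy.1], by linarith [hy.2]⟩

lemma locallyIntegrable_steklov_section (hf : LocallyIntegrable (Function.uncurry f))
    (hk : 0 < k) (y : ℝ) : LocallyIntegrable fun x ↦ steklov k (f x) y := by
  refine locallyIntegrable_iff.2 fun K hK ↦ ?_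
  obtain ⟨R, hR⟩ := hK.isBounded.subset_ball 0
  have integrable : Integrable (fun z : ℝ × ℝ ↦ f z.1 (y + z.2))
      ((volume.restrict (Ioc (-R) R)).prod (uniformMeasure k)) := by
    rw [uniformMeasure, Measure.prod_smul_right]
    refine Integrable.smul_measure ?_ (by simpa using hk)
    simpa using integrable_comp_add_restrict_prod_restrict hf 0 y (-R) R 0 k
  refine IntegrableOn.mono_set integrable.integral_prod_left (hR.trans ?_)
  rw [Real.ball_eq_Ioo, zero_sub, zero_add]
  exact Ioo_subset_Ioc_self

lemma measurable_steklov_section (hf : Measurable (Function.uncurry f)) (y : ℝ) :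
    Measurable fun x ↦ steklov k (f x) y :=
  (hf.comp (measurable_fst.prodMk
    (measurable_snd.const_add y))).stronglyMeasurable.integral_prod_right'.measurable

end LocallyIntegrable

section MixedDifference

/-- The mixed difference `Δ(s,t)f(x,y)`. -/
def mixedDiff (f : ℝ → ℝ → ℝ) (s t x y : ℝ) : ℝ :=
  f (x + s) (y + t) - f (x + s) y - f x (y + t) + f x y

/-- The mixed difference of double Steklov averages of `f` across two scales in each variable. -/
noncomputable def steklovDiff2 (p : ℝ) (n m : ℕ) (f : ℝ → ℝ → ℝ) (x y : ℝ) : ℝ :=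
  steklovDiff p n (fun x' ↦ steklovDiff p m (f x') y) x

/-- The mixed differences of `f` at `(x, y)`, averaged over the steps of the scales `n` and `m`. -/
noncomputable def diffEnergy (p : ℝ) (n m : ℕ) (f : ℝ → ℝ → ℝ) (x y : ℝ) : ℝ≥0∞ :=
  ∫⁻ s, ∫⁻ t, ‖mixedDiff f s t x y‖ₑ ^ p ∂scaleMeasure p m ∂scaleMeasure p n

variable {p : ℝ} {f : ℝ → ℝ → ℝ} {α : Type*} [MeasurableSpace α]

lemma mixedDiff_eq_sub (f : ℝ → ℝ → ℝ) (s t x y : ℝ) :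
    mixedDiff f s t x y = (f (x + s) (y + t) - f x (y + t)) - (f (x + s) y - f x y) := by
  unfold mixedDiff
  ring

lemma measurable_mixedDiff (hf : Measurable (Function.uncurry f)) {s t x y : α → ℝ}
    (hs : Measurable s) (ht : Measurable t) (hx : Measurable x) (hy : Measurable y) :
    Measurable fun a ↦ mixedDiff f (s a) (t a) (x a) (y a) := by
  have comp {u v : α → ℝ} (hu : Measurable u) (hv : Measurable v) :
      Measurable fun a ↦ f (u a) (v a) := hf.comp (hu.prodMk hv)
  exact (((comp (hx.add hs) (hy.add ht)).sub (comp (hx.add hs) hy)).sub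
    (comp hx (hy.add ht))).add (comp hx hy)

lemma measurable_diffEnergy (hf : Measurable (Function.uncurry f)) (n m : ℕ) :
    Measurable (Function.uncurry (diffEnergy p n m f)) := by
  have : Measurable fun z : ((ℝ × ℝ) × ℝ) × ℝ ↦
      ‖mixedDiff f z.1.2 z.2 z.1.1.1 z.1.1.2‖ₑ ^ p :=
    (measurable_mixedDiff hf (by fun_prop) (by fun_prop) (by fun_prop)
      (by fun_prop)).enorm.pow_const p
  exact this.lintegral_prod_right'.lintegral_prod_right'

lemma mixedDiff_periodic (hf : BiPeriodic f) (s t : ℝ) : BiPeriodic (mixedDiff f s t) :=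
  ⟨fun x y ↦ by simp only [mixedDiff, add_right_comm _ (1 : ℝ), hf.1],
    fun x y ↦ by simp only [mixedDiff, add_right_comm _ (1 : ℝ), hf.2]⟩

lemma diffEnergy_periodic_left (hf : BiPeriodic f) (n m : ℕ) (y : ℝ) :
    Function.Periodic (fun x ↦ diffEnergy p n m f x y) 1 := fun x ↦ by
  simp only [diffEnergy, (mixedDiff_periodic hf _ _).1]

lemma diffEnergy_periodic_right (hf : BiPeriodic f) (n m : ℕ) (x : ℝ) :
    Function.Periodic (diffEnergy p n m f x) 1 := fun y ↦ by
  simp only [diffEnergy, (mixedDiff_periodic hf _ _).2]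

lemma steklovDiff_sub_const_mul {u v : ℝ → ℝ} (hu : LocallyIntegrable u)
    (hv : LocallyIntegrable v) (c : ℝ) (n : ℕ) (x : ℝ) :
    steklovDiff p n (fun r ↦ u r - c * v r) x
      = steklovDiff p n u x - c * steklovDiff p n v x := by
  have steklov_sub (m : ℕ) : steklov (steklovScale p m) (fun r ↦ u r - c * v r) x
      = steklov (steklovScale p m) u x - c * steklov (steklovScale p m) v x := by
    simp only [steklov]
    rw [integral_sub (integrable_uniformMeasure_comp_add hu (steklovScale_pos p m) x)
      ((integrable_uniformMeasure_comp_add hv (steklovScale_pos p m) x).const_mul c),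
      integral_const_mul]
  rw [steklovDiff, steklov_sub, steklov_sub, steklovDiff, steklovDiff]
  ring

lemma endDiff_steklovDiff_sub {u v : ℝ → ℝ} (hu : LocallyIntegrable u)
    (hv : LocallyIntegrable v) (n : ℕ) (ε a b : ℝ) :
    endDiff ε a b (steklovDiff p n u) - endDiff ε a b (steklovDiff p n v)
      = endDiff ε a b (steklovDiff p n fun r ↦ u r - v r) := by
  have linear := steklovDiff_sub_const_mul (p := p) hu hv 1 n
  simp only [one_mul] at linear
  rw [endDiff, endDiff, endDiff, linear, linear]
  ring

lemma measurable_steklovDiff_section (hf : Measurable (Function.uncurry f)) (m : ℕ) (y : ℝ) :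
    Measurable fun x ↦ steklovDiff p m (f x) y :=
  (measurable_steklov_section hf y).sub (measurable_steklov_section hf y)

lemma locallyIntegrable_steklovDiff_section (hf : LocallyIntegrable (Function.uncurry f))
    (m : ℕ) (y : ℝ) : LocallyIntegrable fun x ↦ steklovDiff p m (f x) y :=
  (locallyIntegrable_steklov_section hf (steklovScale_pos p _) y).sub
    (locallyIntegrable_steklov_section hf (steklovScale_pos p _) y)

lemma endDiff_endDiff_steklovDiff2 (hf : LocallyIntegrable (Function.uncurry f)) (n m : ℕ)
    (ε a b δ c d : ℝ) :
    endDiff ε a b (fun x ↦ endDiff δ c d (steklovDiff2 p n m f x))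
      = endDiff ε a b (steklovDiff p n fun x ↦ endDiff δ c d (steklovDiff p m (f x))) := by
  congr 1
  funext x
  exact (steklovDiff_sub_const_mul (locallyIntegrable_steklovDiff_section hf m d)
    (locallyIntegrable_steklovDiff_section hf m c) δ n x).symm

lemma enorm_endDiff_steklovDiff_add_sub_rpow_le (hp : 1 < p)
    (hfm : Measurable (Function.uncurry f)) (hf : LocallyIntegrable (Function.uncurry f))
    (m : ℕ) {δ c d : ℝ} (hcd : IsWindow δ c d) (σ : Measure ℝ) [SFinite σ] :
    ∀ᵐ x, ∀ᵐ s ∂σ,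
      ‖endDiff δ c d (steklovDiff p m (f (x + s))) - endDiff δ c d (steklovDiff p m (f x))‖ₑ ^ p
        ≤ 16 ^ p * ∫⁻ y in Ioc c d, ∫⁻ t, ‖mixedDiff f s t x y‖ₑ ^ p ∂scaleMeasure p m := by
  have measurable_section (x : ℝ) : Measurable (f x) := hfm.of_uncurry_left
  filter_upwards [ae_locallyIntegrable_section hf,
    ae_ae_comp_add_of_ae (ae_locallyIntegrable_section hf) σ] with x hx hxs
  filter_upwards [hxs] with s hs
  rw [endDiff_steklovDiff_sub hs hx]
  simp only [mixedDiff_eq_sub]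
  exact enorm_endDiff_steklovDiff_rpow_le (w := fun r ↦ f (x + s) r - f x r) hp
    ((measurable_section (x + s)).sub (measurable_section x)) (hs.sub hx) m hcd

lemma enorm_endDiff_steklovDiff2_rpow_le (hp : 1 < p) (hfm : Measurable (Function.uncurry f))
    (hf : LocallyIntegrable (Function.uncurry f)) (n m : ℕ) {ε a b δ c d : ℝ}
    (hab : IsWindow ε a b) (hcd : IsWindow δ c d) :
    ‖endDiff ε a b (fun x ↦ endDiff δ c d (steklovDiff2 p n m f x))‖ₑ ^ p
      ≤ 256 ^ p * ∫⁻ x in Ioc a b, ∫⁻ y in Ioc c d, diffEnergy p n m f x y := by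
  set W : ℝ → ℝ := fun x ↦ endDiff δ c d (steklovDiff p m (f x))
  have measurable_W : Measurable W :=
    (measurable_steklovDiff_section hfm m d).sub
      ((measurable_steklovDiff_section hfm m c).const_mul δ)
  have locallyIntegrable_W : LocallyIntegrable W :=
    (locallyIntegrable_steklovDiff_section hf m d).sub
      ((locallyIntegrable_steklovDiff_section hf m c).smul δ)
  have swap (x : ℝ) : ∫⁻ s, (∫⁻ y in Ioc c d, ∫⁻ t, ‖mixedDiff f s t x y‖ₑ ^ p
      ∂scaleMeasure p m) ∂scaleMeasure p n = ∫⁻ y in Ioc c d, diffEnergy p n m f x y := by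
    have measurable_integrand : Measurable fun z : (ℝ × ℝ) × ℝ ↦
        ‖mixedDiff f z.1.1 z.2 x z.1.2‖ₑ ^ p :=
      (measurable_mixedDiff hfm (by fun_prop) (by fun_prop) (by fun_prop)
        (by fun_prop)).enorm.pow_const p
    exact lintegral_lintegral_swap
      (measurable_integrand.lintegral_prod_right' (ν := scaleMeasure p m)).aemeasurable
  rw [endDiff_endDiff_steklovDiff2 hf]
  calc ‖endDiff ε a b (steklovDiff p n W)‖ₑ ^ p
      ≤ 16 ^ p * ∫⁻ x in Ioc a b, ∫⁻ s, ‖W (x + s) - W x‖ₑ ^ p ∂scaleMeasure p n :=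
        enorm_endDiff_steklovDiff_rpow_le hp measurable_W locallyIntegrable_W n hab
    _ ≤ 16 ^ p * ∫⁻ x in Ioc a b, ∫⁻ s, 16 ^ p * (∫⁻ y in Ioc c d, ∫⁻ t,
          ‖mixedDiff f s t x y‖ₑ ^ p ∂scaleMeasure p m) ∂scaleMeasure p n := by
        gcongr 1
        refine lintegral_mono_ae (ae_restrict_of_ae ?_)
        exact (enorm_endDiff_steklovDiff_add_sub_rpow_le hp hfm hf m hcd
          (scaleMeasure p n)).mono fun x hx ↦ lintegral_mono_ae hx
    _ = 256 ^ p * ∫⁻ x in Ioc a b, ∫⁻ y in Ioc c d, diffEnergy p n m f x y := by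
        simp_rw [lintegral_const_mul' (16 ^ p : ℝ≥0∞) _ (by finiteness), swap]
        rw [← mul_assoc, ← ENNReal.mul_rpow_of_nonneg _ _ (by linarith)]
        norm_num

end MixedDifference

section Nets

/-- A net `x 0 < ⋯ < x m = x 0 + 1` over one period. The weight `ε` is that of `endDiff`: it is `1`
for increments over the cells of the net, while `ε = 0`, which stands for evaluation at the right
end point, is only allowed for the net with a single cell. -/
structure IsNet (ε : ℝ) (m : ℕ) (x : ℕ → ℝ) : Prop where
  lt_succ : ∀ i < m, x i < x (i + 1)
  eq_add_one : x m = x 0 + 1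
  weight : ε = 1 ∨ (ε = 0 ∧ m = 1)

variable {ε δ : ℝ} {m n : ℕ} {x y : ℕ → ℝ}

lemma IsNet.isWindow (hx : IsNet ε m x) {i : ℕ} (hi : i < m) :
    IsWindow ε (x i) (x (i + 1)) := by
  rcases hx.weight with hε | ⟨hε, rfl⟩
  · exact Or.inl ⟨hε, (hx.lt_succ i hi).le⟩
  · obtain rfl : i = 0 := by lia
    exact Or.inr ⟨hε, hx.eq_add_one.symm⟩

lemma sum_setLIntegral_Ioc (hx : ∀ i < m, x i < x (i + 1)) (F : ℝ → ℝ≥0∞) :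
    ∑ i ∈ Finset.range m, ∫⁻ r in Ioc (x i) (x (i + 1)), F r = ∫⁻ r in Ioc (x 0) (x m), F r := by
  induction m with
  | zero => simp
  | succ k ih =>
    have x_zero_le : x 0 ≤ x k := by
      rw [← sub_nonneg, ← Finset.sum_range_sub]
      exact Finset.sum_nonneg fun i hi ↦
        sub_nonneg.2 (hx i ((Finset.mem_range.1 hi).trans k.lt_succ_self)).le
    rw [Finset.sum_range_succ, ih fun i hi ↦ hx i (by lia),
      ← lintegral_union measurableSet_Ioc (Ioc_disjoint_Ioc_of_le le_rfl),
      Ioc_union_Ioc_eq_Ioc x_zero_le (hx k (by lia)).le]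

lemma setLIntegral_Ioc_add_one_of_periodic {F : ℝ → ℝ≥0∞} (hF : Function.Periodic F 1) (a : ℝ) :
    ∫⁻ x in Ioc a (a + 1), F x = ∫⁻ x in Icc (0 : ℝ) 1, F x := by
  have : VAddInvariantMeasure (AddSubgroup.zmultiples (1 : ℝ)) ℝ volume :=
    ⟨fun c s _ ↦ measure_preimage_add _ _ _⟩
  rw [← restrict_Ioc_eq_restrict_Icc]
  have fundamentalDomain (b : ℝ) := isAddFundamentalDomain_Ioc one_pos b volume
  simpa only [zero_add] using
    (fundamentalDomain a).setLIntegral_eq (fundamentalDomain 0) F hF.map_vadd_zmultiples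

lemma IsNet.sum_setLIntegral (hx : IsNet ε m x) {F : ℝ → ℝ≥0∞} (hF : Function.Periodic F 1) :
    ∑ i ∈ Finset.range m, ∫⁻ r in Ioc (x i) (x (i + 1)), F r = ∫⁻ r in Icc (0 : ℝ) 1, F r := by
  rw [sum_setLIntegral_Ioc hx.lt_succ, hx.eq_add_one, setLIntegral_Ioc_add_one_of_periodic hF]

lemma IsNet.sum_sum_setLIntegral (hx : IsNet ε m x) (hy : IsNet δ n y) {G : ℝ → ℝ → ℝ≥0∞}
    (hG : Measurable (Function.uncurry G)) (periodic_left : ∀ y, Function.Periodic (G · y) 1)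
    (periodic_right : ∀ x, Function.Periodic (G x) 1) :
    ∑ i ∈ Finset.range m, ∑ j ∈ Finset.range n,
        ∫⁻ r in Ioc (x i) (x (i + 1)), ∫⁻ q in Ioc (y j) (y (j + 1)), G r q
      = ∫⁻ r in Icc (0 : ℝ) 1, ∫⁻ q in Icc (0 : ℝ) 1, G r q := by
  have sum_inner (i : ℕ) : ∑ j ∈ Finset.range n,
      ∫⁻ r in Ioc (x i) (x (i + 1)), ∫⁻ q in Ioc (y j) (y (j + 1)), G r q
        = ∫⁻ r in Ioc (x i) (x (i + 1)), ∫⁻ q in Icc (0 : ℝ) 1, G r q := by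
    have measurable_inner (j : ℕ) :
        Measurable fun r ↦ ∫⁻ q in Ioc (y j) (y (j + 1)), G r q := hG.lintegral_prod_right'
    rw [← lintegral_finsetSum _ fun j _ ↦ measurable_inner j]
    simp only [hy.sum_setLIntegral (periodic_right _)]
  simp only [sum_inner]
  exact hx.sum_setLIntegral fun r ↦ lintegral_congr fun q ↦ periodic_left q r

end Nets

section ScaleBound

/-- The mixed modulus of continuity of `f` at the scales `n` and `m`, weighted by the `-1/p`-th
powers of these scales. -/
noncomputable def scaledModulus (p : ℝ) (f : ℝ → ℝ → ℝ) (n m : ℕ) : ℝ≥0∞ :=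
  ENNReal.ofReal (steklovScale p n)⁻¹ ^ (1 / p) * ENNReal.ofReal (steklovScale p m)⁻¹ ^ (1 / p)
    * mixedModulus p f (steklovScale p n) (steklovScale p m)

/-- The bound for the `p`-variation of `steklovDiff2 p n m f`. -/
noncomputable def scaleBound (p : ℝ) (f : ℝ → ℝ → ℝ) (n m : ℕ) : ℝ≥0∞ :=
  1024 * ∑ i ∈ Finset.range 2, ∑ j ∈ Finset.range 2, scaledModulus p f (n + i) (m + j)

variable {p : ℝ} {f : ℝ → ℝ → ℝ}

lemma ofReal_abs_rpow (hp : 0 ≤ p) (r : ℝ) : ENNReal.ofReal (|r| ^ p) = ‖r‖ₑ ^ p := by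
  rw [← ENNReal.ofReal_rpow_of_nonneg (abs_nonneg r) hp, ← Real.enorm_eq_ofReal_abs]

lemma lpNorm2_rpow (hp : 0 < p) (f : ℝ → ℝ → ℝ) :
    lpNorm2 p f ^ p = ∫⁻ x in Icc (0 : ℝ) 1, ∫⁻ y in Icc (0 : ℝ) 1, ‖f x y‖ₑ ^ p := by
  simp only [lpNorm2, ofReal_abs_rpow hp.le]
  rw [one_div, ENNReal.rpow_inv_rpow hp.ne']

lemma lpNorm2_mixedDiff_le_mixedModulus {s t u v : ℝ} (hs : s ∈ Icc 0 u) (ht : t ∈ Icc 0 v) :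
    lpNorm2 p (mixedDiff f s t) ≤ mixedModulus p f u v :=
  le_iSup₂_of_le s hs (le_iSup₂_of_le t ht le_rfl)

lemma lintegral_lintegral_comm_lintegral_lintegral {α β γ δ : Type*} [MeasurableSpace α]
    [MeasurableSpace β] [MeasurableSpace γ] [MeasurableSpace δ] (μ : Measure α) [SFinite μ]
    (ν : Measure β) [SFinite ν] (κ : Measure γ) [SFinite κ] (ρ : Measure δ) [SFinite ρ]
    {G : α × β → γ × δ → ℝ≥0∞} (hG : Measurable (Function.uncurry G)) :
    ∫⁻ a, ∫⁻ b, ∫⁻ c, ∫⁻ d, G (a, b) (c, d) ∂ρ ∂κ ∂ν ∂μ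
      = ∫⁻ c, ∫⁻ d, ∫⁻ a, ∫⁻ b, G (a, b) (c, d) ∂ν ∂μ ∂ρ ∂κ := by
  have inner_left (z : α × β) :
      ∫⁻ c, ∫⁻ d, G z (c, d) ∂ρ ∂κ = ∫⁻ w, G z w ∂κ.prod ρ :=
    (lintegral_prod _ hG.of_uncurry_left.aemeasurable).symm
  have inner_right (w : γ × δ) :
      ∫⁻ a, ∫⁻ b, G (a, b) w ∂ν ∂μ = ∫⁻ z, G z w ∂μ.prod ν :=
    (lintegral_prod _ hG.of_uncurry_right.aemeasurable).symm
  simp only [inner_left, inner_right]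
  calc ∫⁻ a, ∫⁻ b, ∫⁻ w, G (a, b) w ∂κ.prod ρ ∂ν ∂μ
      = ∫⁻ z, ∫⁻ w, G z w ∂κ.prod ρ ∂μ.prod ν :=
        (lintegral_prod _ hG.lintegral_prod_right'.aemeasurable).symm
    _ = ∫⁻ w, ∫⁻ z, G z w ∂μ.prod ν ∂κ.prod ρ := lintegral_lintegral_swap hG.aemeasurable
    _ = ∫⁻ c, ∫⁻ d, ∫⁻ z, G z (c, d) ∂μ.prod ν ∂ρ ∂κ :=
        lintegral_prod _ hG.lintegral_prod_left'.aemeasurable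

lemma lintegral_diffEnergy (hp : 0 < p) (hf : Measurable (Function.uncurry f)) (n m : ℕ) :
    ∫⁻ x in Icc (0 : ℝ) 1, ∫⁻ y in Icc (0 : ℝ) 1, diffEnergy p n m f x y
      = ∫⁻ s, ∫⁻ t, lpNorm2 p (mixedDiff f s t) ^ p ∂scaleMeasure p m ∂scaleMeasure p n := by
  simp only [lpNorm2_rpow hp, diffEnergy]
  exact lintegral_lintegral_comm_lintegral_lintegral _ _ _ _
    (G := fun z w ↦ ‖mixedDiff f w.1 w.2 z.1 z.2‖ₑ ^ p)
    ((measurable_mixedDiff hf (by fun_prop) (by fun_prop) (by fun_prop)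
      (by fun_prop)).enorm.pow_const p)

lemma lintegral_scaleMeasure_le {F : ℝ → ℝ≥0∞} {c : ℕ → ℝ≥0∞}
    (hF : ∀ k, ∀ s ∈ Icc 0 (steklovScale p k), F s ≤ c k) (n : ℕ) :
    ∫⁻ s, F s ∂scaleMeasure p n
      ≤ ∑ i ∈ Finset.range 2, 2 * ENNReal.ofReal (steklovScale p (n + i))⁻¹ * c (n + i) := by
  have lintegral_step_le (k : ℕ) : ∫⁻ s, F s ∂stepMeasure (steklovScale p k)
      ≤ 2 * ENNReal.ofReal (steklovScale p k)⁻¹ * c k := by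
    rw [← stepMeasure_univ (steklovScale_pos p k), mul_comm, ← lintegral_const]
    exact lintegral_mono_ae ((ae_stepMeasure_mem_Icc (steklovScale_pos p k)).mono (hF k))
  rw [scaleMeasure, lintegral_add_measure, Finset.sum_range_succ, Finset.sum_range_one]
  exact add_le_add (lintegral_step_le n) (lintegral_step_le (n + 1))

lemma scaledModulus_rpow (hp : 0 < p) (n m : ℕ) :
    scaledModulus p f n m ^ p = ENNReal.ofReal (steklovScale p n)⁻¹
      * ENNReal.ofReal (steklovScale p m)⁻¹
      * mixedModulus p f (steklovScale p n) (steklovScale p m) ^ p := by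
  rw [scaledModulus, ENNReal.mul_rpow_of_nonneg _ _ hp.le, ENNReal.mul_rpow_of_nonneg _ _ hp.le,
    one_div, ENNReal.rpow_inv_rpow hp.ne', ENNReal.rpow_inv_rpow hp.ne']

lemma sum_range_two_rpow_le (hp : 1 ≤ p) (a : ℕ → ℝ≥0∞) :
    ∑ i ∈ Finset.range 2, a i ^ p ≤ (∑ i ∈ Finset.range 2, a i) ^ p := by
  simpa [Finset.sum_range_succ] using ENNReal.add_rpow_le_rpow_add (a 0) (a 1) hp

lemma lintegral_diffEnergy_le (hp : 1 ≤ p) (hf : Measurable (Function.uncurry f)) (n m : ℕ) :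
    256 ^ p * ∫⁻ x in Icc (0 : ℝ) 1, ∫⁻ y in Icc (0 : ℝ) 1, diffEnergy p n m f x y
      ≤ scaleBound p f n m ^ p := by
  have hp0 : 0 < p := by linarith
  have four_le : (4 : ℝ≥0∞) ≤ 4 ^ p := by
    simpa using ENNReal.rpow_le_rpow_of_exponent_le (x := 4) (by norm_num) hp
  calc _ ≤ 256 ^ p * ∑ i ∈ Finset.range 2, 2 * ENNReal.ofReal (steklovScale p (n + i))⁻¹
        * ∑ j ∈ Finset.range 2, 2 * ENNReal.ofReal (steklovScale p (m + j))⁻¹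
        * mixedModulus p f (steklovScale p (n + i)) (steklovScale p (m + j)) ^ p := by
        rw [lintegral_diffEnergy hp0 hf]
        gcongr
        refine lintegral_scaleMeasure_le (c := fun k ↦ ∑ j ∈ Finset.range 2,
          2 * ENNReal.ofReal (steklovScale p (m + j))⁻¹
          * mixedModulus p f (steklovScale p k) (steklovScale p (m + j)) ^ p) (fun k s hs ↦ ?_) n
        refine lintegral_scaleMeasure_le (c := fun l ↦
          mixedModulus p f (steklovScale p k) (steklovScale p l) ^ p) (fun l t ht ↦ ?_) m
        exact ENNReal.rpow_le_rpow (lpNorm2_mixedDiff_le_mixedModulus hs ht) hp0.le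
    _ = 256 ^ p * (4 * ∑ i ∈ Finset.range 2, ∑ j ∈ Finset.range 2,
          scaledModulus p f (n + i) (m + j) ^ p) := by
        simp only [scaledModulus_rpow hp0, Finset.mul_sum]
        refine Finset.sum_congr rfl fun i _ ↦ Finset.sum_congr rfl fun j _ ↦ ?_
        ring
    _ ≤ 256 ^ p * (4 ^ p * (∑ i ∈ Finset.range 2, ∑ j ∈ Finset.range 2,
          scaledModulus p f (n + i) (m + j)) ^ p) := by
        gcongr
        exact (Finset.sum_le_sum fun i _ ↦ sum_range_two_rpow_le hp _).trans
          (sum_range_two_rpow_le hp _)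
    _ = scaleBound p f n m ^ p := by
        rw [← ENNReal.mul_rpow_of_nonneg _ _ hp0.le, ← ENNReal.mul_rpow_of_nonneg _ _ hp0.le,
          scaleBound, ← mul_assoc]
        norm_num

lemma sum_enorm_endDiff_steklovDiff2_rpow_le (hp : 1 < p) (hfm : Measurable (Function.uncurry f))
    (hf : LocallyIntegrable (Function.uncurry f)) (hper : BiPeriodic f) (n m : ℕ)
    {ε δ : ℝ} {M N : ℕ} {x y : ℕ → ℝ} (hx : IsNet ε M x) (hy : IsNet δ N y) :
    ∑ i ∈ Finset.range M, ∑ j ∈ Finset.range N,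
      ‖endDiff ε (x i) (x (i + 1)) fun r ↦
        endDiff δ (y j) (y (j + 1)) (steklovDiff2 p n m f r)‖ₑ ^ p ≤ scaleBound p f n m ^ p := by
  refine le_trans ?_ (lintegral_diffEnergy_le hp.le hfm n m)
  rw [← hx.sum_sum_setLIntegral hy (measurable_diffEnergy hfm n m)
    (diffEnergy_periodic_left hper n m) (diffEnergy_periodic_right hper n m), Finset.mul_sum]
  refine Finset.sum_le_sum fun i hi ↦ ?_
  rw [Finset.mul_sum]
  refine Finset.sum_le_sum fun j hj ↦ ?_
  exact enorm_endDiff_steklovDiff2_rpow_le hp hfm hf n m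
    (hx.isWindow (Finset.mem_range.1 hi)) (hy.isWindow (Finset.mem_range.1 hj))

end ScaleBound

section MixedModulus

variable {p : ℝ} {f g : ℝ → ℝ → ℝ}

lemma lpNorm2_eq_lintegral_prod (hp : 0 ≤ p) (hf : Measurable (Function.uncurry f)) :
    lpNorm2 p f = (∫⁻ z, ‖f z.1 z.2‖ₑ ^ p
      ∂(volume.restrict (Icc (0 : ℝ) 1)).prod (volume.restrict (Icc (0 : ℝ) 1))) ^ (1 / p) := by
  simp only [lpNorm2, ofReal_abs_rpow hp]
  exact congrArg (· ^ (1 / p)) (lintegral_prod _ (hf.enorm.pow_const p).aemeasurable).symm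

lemma lpNorm2_add_le (hp : 1 ≤ p) (hf : Measurable (Function.uncurry f))
    (hg : Measurable (Function.uncurry g)) :
    lpNorm2 p (fun x y ↦ f x y + g x y) ≤ lpNorm2 p f + lpNorm2 p g := by
  have hp0 : 0 ≤ p := by linarith
  rw [lpNorm2_eq_lintegral_prod hp0 hf, lpNorm2_eq_lintegral_prod hp0 hg,
    lpNorm2_eq_lintegral_prod hp0 (f := fun x y ↦ f x y + g x y) (hf.add hg)]
  refine le_trans ?_ (ENNReal.lintegral_Lp_add_le hf.enorm.aemeasurable hg.enorm.aemeasurable hp)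
  gcongr with z
  exact enorm_add_le _ _

lemma setLIntegral_Icc_comp_add_of_periodic {F : ℝ → ℝ≥0∞} (hF : Function.Periodic F 1) (a : ℝ) :
    ∫⁻ x in Icc (0 : ℝ) 1, F (x + a) = ∫⁻ x in Icc (0 : ℝ) 1, F x := by
  rw [← setLIntegral_Ioc_add_one_of_periodic hF a, ← restrict_Ioc_eq_restrict_Icc,
    ← (measurePreserving_add_right (volume : Measure ℝ) a).setLIntegral_comp_preimage_emb
      (MeasurableEquiv.addRight a).measurableEmbedding F, preimage_add_const_Ioc]
  simp

lemma lpNorm2_comp_add_left (hf : BiPeriodic f) (a : ℝ) :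
    lpNorm2 p (fun x y ↦ f (x + a) y) = lpNorm2 p f := by
  unfold lpNorm2
  rw [setLIntegral_Icc_comp_add_of_periodic
    (F := fun x ↦ ∫⁻ y in Icc (0 : ℝ) 1, ENNReal.ofReal (|f x y| ^ p))]
  exact fun x ↦ by simp only [hf.1]

lemma lpNorm2_swap (hp : 0 ≤ p) (hf : Measurable (Function.uncurry f)) :
    lpNorm2 p (fun y x ↦ f x y) = lpNorm2 p f := by
  simp only [lpNorm2, ofReal_abs_rpow hp]
  rw [lintegral_lintegral_swap ((hf.comp measurable_swap).enorm.pow_const p).aemeasurable]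

lemma mixedModulus_mono {u u' v v' : ℝ} (hu : u ≤ u') (hv : v ≤ v') :
    mixedModulus p f u v ≤ mixedModulus p f u' v' :=
  iSup₂_le fun _ hs ↦ iSup₂_le fun _ ht ↦
    lpNorm2_mixedDiff_le_mixedModulus ⟨hs.1, hs.2.trans hu⟩ ⟨ht.1, ht.2.trans hv⟩

lemma measurable_uncurry_mixedDiff (hf : Measurable (Function.uncurry f)) (s t : ℝ) :
    Measurable (Function.uncurry (mixedDiff f s t)) :=
  measurable_mixedDiff hf measurable_const measurable_const measurable_fst measurable_snd

lemma mixedModulus_swap (hp : 0 ≤ p) (hf : Measurable (Function.uncurry f)) (u v : ℝ) :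
    mixedModulus p (fun y x ↦ f x y) v u = mixedModulus p f u v := by
  have lpNorm2_mixedDiff_swap (s t : ℝ) :
      lpNorm2 p (mixedDiff (fun y x ↦ f x y) t s) = lpNorm2 p (mixedDiff f s t) := by
    rw [← lpNorm2_swap hp (measurable_uncurry_mixedDiff hf s t)]
    congr 1
    funext x y
    simp only [mixedDiff]
    ring
  refine le_antisymm (iSup₂_le fun t ht ↦ iSup₂_le fun s hs ↦ ?_)
    (iSup₂_le fun s hs ↦ iSup₂_le fun t ht ↦ ?_)
  · exact (lpNorm2_mixedDiff_swap s t).trans_le (lpNorm2_mixedDiff_le_mixedModulus hs ht)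
  · exact (lpNorm2_mixedDiff_swap s t).symm.trans_le (lpNorm2_mixedDiff_le_mixedModulus ht hs)

lemma lpNorm2_mixedDiff_nat_mul_le (hp : 1 ≤ p) (hf : Measurable (Function.uncurry f))
    (hper : BiPeriodic f) (s t : ℝ) (k : ℕ) :
    lpNorm2 p (mixedDiff f (k * s) t) ≤ k * lpNorm2 p (mixedDiff f s t) := by
  induction k with
  | zero =>
    have hp0 : 0 < p := by linarith
    simp [lpNorm2, mixedDiff, Real.zero_rpow hp0.ne', hp0]
  | succ k ih =>
    have eq_add : mixedDiff f ((k + 1 : ℕ) * s) t =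
        fun x y ↦ mixedDiff f (k * s) t x y + mixedDiff f s t (x + k * s) y := by
      funext x y
      simp only [mixedDiff]
      push_cast
      rw [add_one_mul, ← add_assoc]
      ring
    calc lpNorm2 p (mixedDiff f ((k + 1 : ℕ) * s) t)
        ≤ lpNorm2 p (mixedDiff f (k * s) t)
          + lpNorm2 p (fun x y ↦ mixedDiff f s t (x + k * s) y) := by
          rw [eq_add]
          exact lpNorm2_add_le hp (measurable_uncurry_mixedDiff hf _ t)
            (measurable_mixedDiff hf measurable_const measurable_const
              (measurable_fst.add_const _) measurable_snd)
      _ ≤ k * lpNorm2 p (mixedDiff f s t) + lpNorm2 p (mixedDiff f s t) := by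
          gcongr
          exact (lpNorm2_comp_add_left (mixedDiff_periodic hper s t) _).le
      _ = (k + 1 : ℕ) * lpNorm2 p (mixedDiff f s t) := by
          push_cast
          ring

lemma mixedModulus_le_mul_left (hp : 1 ≤ p) (hf : Measurable (Function.uncurry f))
    (hper : BiPeriodic f) {u t : ℝ} (hu : 0 < u) (hut : u ≤ t) (v : ℝ) :
    mixedModulus p f t v ≤ ENNReal.ofReal (2 * t / u) * mixedModulus p f u v := by
  refine iSup₂_le fun s hs ↦ iSup₂_le fun r hr ↦ ?_
  have one_le : 1 ≤ t / u := (one_le_div hu).2 hut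
  set k := ⌈t / u⌉₊
  have le_k : t / u ≤ k := Nat.le_ceil _
  have k_le : (k : ℝ) ≤ 2 * t / u := by
    rw [mul_div_assoc]
    linarith [Nat.ceil_lt_add_one (by linarith : 0 ≤ t / u)]
  have k_pos : (0 : ℝ) < k := by linarith
  have step_mem : s / k ∈ Icc 0 u :=
    ⟨div_nonneg hs.1 k_pos.le, (div_le_iff₀ k_pos).2 (by linarith [(div_le_iff₀ hu).1 le_k, hs.2])⟩
  calc lpNorm2 p (mixedDiff f s r) = lpNorm2 p (mixedDiff f (k * (s / k)) r) := by
        rw [mul_div_cancel₀ _ k_pos.ne']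
    _ ≤ k * lpNorm2 p (mixedDiff f (s / k) r) := lpNorm2_mixedDiff_nat_mul_le hp hf hper _ r k
    _ ≤ ENNReal.ofReal (2 * t / u) * mixedModulus p f u v := by
        rw [← ENNReal.ofReal_natCast]
        gcongr
        exact lpNorm2_mixedDiff_le_mixedModulus step_mem hr

lemma BiPeriodic.swap (hf : BiPeriodic f) : BiPeriodic fun y x ↦ f x y :=
  ⟨fun y x ↦ hf.2 x y, fun y x ↦ hf.1 x y⟩

lemma mixedModulus_le_mul_right (hp : 1 ≤ p) (hf : Measurable (Function.uncurry f))
    (hper : BiPeriodic f) {u t : ℝ} (hu : 0 < u) (hut : u ≤ t) (v : ℝ) :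
    mixedModulus p f v t ≤ ENNReal.ofReal (2 * t / u) * mixedModulus p f v u := by
  rw [← mixedModulus_swap (by linarith) hf, ← mixedModulus_swap (by linarith) hf]
  exact mixedModulus_le_mul_left (f := fun y x ↦ f x y) hp (hf.comp measurable_swap)
    hper.swap hu hut v

end MixedModulus

section WeightedIntegral

/-- A function with the growth of a modulus of continuity: nondecreasing, and growing by at most the
factor `2 * t / u` from `u` to `t`. -/
structure IsModulus (Ω : ℝ → ℝ≥0∞) : Prop where
  mono : ∀ u t, 0 < u → u ≤ t → Ω u ≤ Ω t
  le_mul : ∀ u t, 0 < u → u ≤ t → Ω t ≤ ENNReal.ofReal (2 * t / u) * Ω u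

/-- The weight `u^{-1/p} / u` of the integrals `K_p` and `I_p`. -/
noncomputable def singularWeight (p u : ℝ) : ℝ≥0∞ := ENNReal.ofReal (u ^ (-(1 / p)) / u)

/-- The integral `∫₀¹ u^{-1/p} Ω(u) du/u`. -/
noncomputable def weightedIntegral (p : ℝ) (Ω : ℝ → ℝ≥0∞) : ℝ≥0∞ :=
  ∫⁻ u in Ioc (0 : ℝ) 1, singularWeight p u * Ω u

variable {p t : ℝ} {Ω : ℝ → ℝ≥0∞}

lemma setLIntegral_Ioc_ofReal_rpow {r a b : ℝ} (ha : 0 < a) (hab : a ≤ b) (hr : r ≠ -1) :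
    ∫⁻ u in Ioc a b, ENNReal.ofReal (u ^ r)
      = ENNReal.ofReal ((b ^ (r + 1) - a ^ (r + 1)) / (r + 1)) := by
  have zero_notMem : (0 : ℝ) ∉ uIcc a b := by
    rw [uIcc_of_le hab]
    exact fun h ↦ ha.not_ge h.1
  rw [← ofReal_integral_eq_lintegral_ofReal, ← intervalIntegral.integral_of_le hab,
    integral_rpow (Or.inr ⟨hr, zero_notMem⟩)]
  · exact (intervalIntegral.intervalIntegrable_rpow (Or.inr zero_notMem)).1
  · filter_upwards [ae_restrict_mem measurableSet_Ioc] with u hu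
    exact Real.rpow_nonneg (ha.trans hu.1).le r

lemma IsModulus.le_setLIntegral_above (hp : 0 < p) (hΩ : IsModulus Ω) (ht : 0 < t) :
    ENNReal.ofReal (p / 2 * t ^ (-(1 / p))) * Ω t
      ≤ ∫⁻ u in Ioc t (t * 2 ^ p), singularWeight p u * Ω u := by
  have inv_pos : 0 < 1 / p := by positivity
  have le_top : t ≤ t * 2 ^ p :=
    le_mul_of_one_le_right ht.le (Real.one_le_rpow (by norm_num) hp.le)
  calc _ = ∫⁻ u in Ioc t (t * 2 ^ p), ENNReal.ofReal (u ^ (-(1 / p) - 1)) * Ω t := by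
        rw [lintegral_mul_const _ (by fun_prop),
          setLIntegral_Ioc_ofReal_rpow ht le_top (by linarith)]
        congr 2
        rw [sub_add_cancel, Real.mul_rpow ht.le (by positivity), ← Real.rpow_mul (by norm_num),
          mul_neg, mul_one_div_cancel hp.ne', Real.rpow_neg_one]
        field_simp
        ring
    _ ≤ _ := by
        refine setLIntegral_mono' measurableSet_Ioc fun u hu ↦ ?_
        refine mul_le_mul' ?_ (hΩ.mono _ _ ht hu.1.le)
        rw [singularWeight, Real.rpow_sub_one (ht.trans hu.1).ne']

lemma IsModulus.le_setLIntegral_below (hp : 1 < p) (hΩ : IsModulus Ω) (ht : 0 < t) :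
    ENNReal.ofReal (p / (p - 1) / 4 * t ^ (-(1 / p))) * Ω t
      ≤ ∫⁻ u in Ioc (t * 2 ^ (-(p / (p - 1)))) t, singularWeight p u * Ω u := by
  have : 0 < p - 1 := by linarith
  set q := p / (p - 1) with hq
  have q_pos : 0 < q := by positivity
  have inv_q : -(1 / p) + 1 = 1 / q := by
    rw [hq]
    field_simp
    ring
  have inv_q_pos : 0 < 1 / q := by positivity
  have bot_pos : 0 < t * 2 ^ (-q) := by positivity
  have bot_le : t * 2 ^ (-q) ≤ t := mul_le_of_le_one_right ht.le
    (Real.rpow_le_one_of_one_le_of_nonpos (by norm_num) (by linarith))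
  calc _ = ∫⁻ u in Ioc (t * 2 ^ (-q)) t, ENNReal.ofReal (u ^ (-(1 / p))) *
          (ENNReal.ofReal (1 / (2 * t)) * Ω t) := by
        rw [lintegral_mul_const _ (by fun_prop),
          setLIntegral_Ioc_ofReal_rpow bot_pos bot_le (by linarith), ← mul_assoc,
          ← ENNReal.ofReal_mul' (by positivity)]
        congr 2
        rw [inv_q, Real.mul_rpow ht.le (by positivity), ← Real.rpow_mul (by norm_num), neg_mul,
          mul_one_div_cancel q_pos.ne', Real.rpow_neg_one, ← inv_q, Real.rpow_add_one ht.ne', inv_q]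
        field_simp
        ring
    _ ≤ _ := by
        refine setLIntegral_mono' measurableSet_Ioc fun u hu ↦ ?_
        have hu0 : 0 < u := bot_pos.trans hu.1
        refine (mul_le_mul_right (mul_le_mul_right (hΩ.le_mul u t hu0 hu.2) _) _).trans_eq ?_
        rw [← mul_assoc, ← mul_assoc, ← ENNReal.ofReal_mul (by positivity),
          ← ENNReal.ofReal_mul (by positivity), singularWeight]
        congr 2
        field_simp

/-- The two halves of the tile around `t` contribute multiples of `p'` and of `p`, which add up to
`pp'`. -/
lemma IsModulus.le_setLIntegral_tile (hp : 1 < p) (hΩ : IsModulus Ω) (ht : 0 < t) :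
    ENNReal.ofReal t⁻¹ ^ (1 / p) * Ω t ≤ ENNReal.ofReal (4 * (1 / (p * (p / (p - 1))))) *
      ∫⁻ u in Ioc (t * 2 ^ (-(p / (p - 1)))) (t * 2 ^ p), singularWeight p u * Ω u := by
  have hp0 : 0 < p := by linarith
  have hp1 : 0 < p - 1 := by linarith
  have bot_le : t * 2 ^ (-(p / (p - 1))) ≤ t := mul_le_of_le_one_right ht.le
    (Real.rpow_le_one_of_one_le_of_nonpos (by norm_num) (neg_nonpos.2 (by positivity)))
  have le_top : t ≤ t * 2 ^ p :=
    le_mul_of_one_le_right ht.le (Real.one_le_rpow (by norm_num) hp0.le)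
  rw [← Ioc_union_Ioc_eq_Ioc bot_le le_top,
    lintegral_union measurableSet_Ioc (Ioc_disjoint_Ioc_of_le le_rfl)]
  calc _ = ENNReal.ofReal (4 * (1 / (p * (p / (p - 1))))) *
        (ENNReal.ofReal (p / (p - 1) / 4 * t ^ (-(1 / p))) * Ω t
          + ENNReal.ofReal (p / 4 * t ^ (-(1 / p))) * Ω t) := by
        rw [← add_mul, ← ENNReal.ofReal_add (by positivity) (by positivity), ← mul_assoc,
          ← ENNReal.ofReal_mul (by positivity), ENNReal.ofReal_rpow_of_pos (by positivity)]
        congr 2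
        rw [Real.inv_rpow ht.le, ← Real.rpow_neg ht.le]
        field_simp
        ring
    _ ≤ _ := by
        gcongr
        · exact hΩ.le_setLIntegral_below hp ht
        · refine le_trans ?_ (hΩ.le_setLIntegral_above hp0 ht)
          gcongr
          norm_num

lemma IsModulus.tsum_le_weightedIntegral (hp : 1 < p) (hΩ : IsModulus Ω) :
    ∑' n, ENNReal.ofReal (steklovScale p (n + 1))⁻¹ ^ (1 / p) * Ω (steklovScale p (n + 1))
      ≤ ENNReal.ofReal (4 * (1 / (p * (p / (p - 1))))) * weightedIntegral p Ω := by
  have hp1 : 0 < p - 1 := by linarith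
  have exponent_nonneg : 0 ≤ p * (p / (p - 1)) := by positivity
  set σ : ℕ → ℝ := fun n ↦ steklovScale p (n + 1) * 2 ^ p
  have bot_eq (n : ℕ) : steklovScale p (n + 1) * 2 ^ (-(p / (p - 1))) = σ (n + 1) := by
    simp only [σ]
    rw [steklovScale_succ p (n + 1), mul_assoc, ← Real.rpow_add (by norm_num)]
    congr 2
    field_simp
    ring
  have antitone_σ : Antitone σ := antitone_nat_of_succ_le fun n ↦ by
    refine mul_le_mul_of_nonneg_right ?_ (by positivity)
    rw [steklovScale_succ p (n + 1)]
    exact mul_le_of_le_one_right (steklovScale_pos p _).le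
      (Real.rpow_le_one_of_one_le_of_nonpos (by norm_num) (neg_nonpos.2 exponent_nonneg))
  have σ_zero_le : σ 0 ≤ 1 := by
    simp only [σ]
    rw [steklovScale_succ, steklovScale_zero, one_mul, ← Real.rpow_add (by norm_num)]
    refine Real.rpow_le_one_of_one_le_of_nonpos (by norm_num) ?_
    rw [neg_add_nonpos_iff]
    exact le_mul_of_one_le_right (by linarith) ((one_le_div hp1).2 (by linarith))
  have tile_subset (n : ℕ) : Ioc (σ (n + 1)) (σ n) ⊆ Ioc 0 1 :=
    Ioc_subset_Ioc (mul_nonneg (steklovScale_pos p _).le (by positivity))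
      ((antitone_σ n.zero_le).trans σ_zero_le)
  calc _ ≤ ∑' n, ENNReal.ofReal (4 * (1 / (p * (p / (p - 1))))) *
        ∫⁻ u in Ioc (σ (n + 1)) (σ n), singularWeight p u * Ω u := by
        refine ENNReal.tsum_le_tsum fun n ↦ ?_
        rw [← bot_eq]
        exact hΩ.le_setLIntegral_tile hp (steklovScale_pos p (n + 1))
    _ = ENNReal.ofReal (4 * (1 / (p * (p / (p - 1))))) *
        ∫⁻ u in ⋃ n, Ioc (σ (n + 1)) (σ n), singularWeight p u * Ω u := by
        rw [ENNReal.tsum_mul_left, lintegral_iUnion (fun n ↦ measurableSet_Ioc)]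
        exact antitone_σ.pairwise_disjoint_on_Ioc_succ
    _ ≤ _ := by
        rw [weightedIntegral]
        gcongr
        exact iUnion_subset tile_subset

lemma IsModulus.apply_one_le (hp : 0 < p) (hΩ : IsModulus Ω) :
    Ω 1 ≤ 2 * weightedIntegral p Ω := by
  have pointwise (u : ℝ) (hu : u ∈ Ioc (0 : ℝ) 1) : Ω 1 ≤ 2 * (singularWeight p u * Ω u) := by
    have hu0 : 0 < u := hu.1
    calc Ω 1 ≤ ENNReal.ofReal (2 * 1 / u) * Ω u := hΩ.le_mul u 1 hu0 hu.2
      _ = 2 * (ENNReal.ofReal (1 / u) * Ω u) := by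
          rw [mul_div_assoc, ENNReal.ofReal_mul (by norm_num), ENNReal.ofReal_ofNat, mul_assoc]
      _ ≤ 2 * (singularWeight p u * Ω u) := by
          unfold singularWeight
          gcongr
          exact Real.one_le_rpow_of_pos_of_le_one_of_nonpos hu0 hu.2
            (neg_nonpos.2 (by positivity))
  calc Ω 1 = ∫⁻ _ in Ioc (0 : ℝ) 1, Ω 1 := by simp
    _ ≤ ∫⁻ u in Ioc (0 : ℝ) 1, 2 * (singularWeight p u * Ω u) :=
        setLIntegral_mono' measurableSet_Ioc pointwise
    _ = 2 * weightedIntegral p Ω := lintegral_const_mul' _ _ (by simp)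

end WeightedIntegral

section ScaleSums

variable {p : ℝ} {f : ℝ → ℝ → ℝ}

lemma isModulus_mixedModulus_left (hp : 1 ≤ p) (hf : Measurable (Function.uncurry f))
    (hper : BiPeriodic f) (v : ℝ) : IsModulus fun u ↦ mixedModulus p f u v where
  mono _ _ _ hut := mixedModulus_mono hut le_rfl
  le_mul _ _ hu hut := mixedModulus_le_mul_left hp hf hper hu hut v

lemma isModulus_mixedModulus_right (hp : 1 ≤ p) (hf : Measurable (Function.uncurry f))
    (hper : BiPeriodic f) (u : ℝ) : IsModulus (mixedModulus p f u) where
  mono _ _ _ hvt := mixedModulus_mono le_rfl hvt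
  le_mul _ _ hv hvt := mixedModulus_le_mul_right hp hf hper hv hvt u

lemma isModulus_weightedIntegral_mixedModulus (hp : 1 ≤ p) (hf : Measurable (Function.uncurry f))
    (hper : BiPeriodic f) : IsModulus fun u ↦ weightedIntegral p (mixedModulus p f u) where
  mono u t _ hut := by
    unfold weightedIntegral
    gcongr
    exact mixedModulus_mono hut le_rfl
  le_mul u t hu hut := by
    unfold weightedIntegral
    rw [← lintegral_const_mul' _ _ (by simp)]
    refine lintegral_mono fun v ↦ ?_
    rw [mul_left_comm]
    gcongr
    exact mixedModulus_le_mul_left hp hf hper hu hut v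

lemma Ip_eq_weightedIntegral (p : ℝ) (f : ℝ → ℝ → ℝ) :
    Ip p f = weightedIntegral p fun u ↦ weightedIntegral p (mixedModulus p f u) := by
  refine setLIntegral_congr_fun measurableSet_Ioc fun u hu ↦ ?_
  simp only [weightedIntegral]
  rw [← lintegral_const_mul' _ _ (by simp [singularWeight])]
  refine setLIntegral_congr_fun measurableSet_Ioc fun v hv ↦ ?_
  have hu0 : 0 < u := hu.1
  have hv0 : 0 < v := hv.1
  simp only [singularWeight]
  rw [← mul_assoc, ← ENNReal.ofReal_mul (by positivity), Real.mul_rpow hu0.le hv0.le]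
  congr 2
  field_simp

lemma Kp_eq_weightedIntegral_add (p : ℝ) (f : ℝ → ℝ → ℝ) :
    Kp p f = weightedIntegral p (fun u ↦ mixedModulus p f u 1)
      + weightedIntegral p (mixedModulus p f 1) := by
  have measurable_left : Measurable fun u ↦ mixedModulus p f u 1 :=
    Monotone.measurable fun _ _ h ↦ mixedModulus_mono h le_rfl
  have measurable_singularWeight : Measurable (singularWeight p) := by
    unfold singularWeight
    fun_prop
  simp only [Kp, weightedIntegral, singularWeight, mul_add]
  exact lintegral_add_left (measurable_singularWeight.mul measurable_left) _

lemma Kp_le_four_mul_Ip (hp : 1 ≤ p) (hf : Measurable (Function.uncurry f)) (hper : BiPeriodic f) :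
    Kp p f ≤ 4 * Ip p f := by
  have hp0 : 0 < p := by linarith
  have left_le : weightedIntegral p (fun u ↦ mixedModulus p f u 1) ≤ 2 * Ip p f := by
    rw [Ip_eq_weightedIntegral, weightedIntegral, weightedIntegral,
      ← lintegral_const_mul' _ _ (by simp)]
    refine lintegral_mono fun u ↦ ?_
    rw [mul_left_comm]
    gcongr
    exact (isModulus_mixedModulus_right hp hf hper u).apply_one_le hp0
  have right_le : weightedIntegral p (mixedModulus p f 1) ≤ 2 * Ip p f := by
    rw [Ip_eq_weightedIntegral]
    exact (isModulus_weightedIntegral_mixedModulus hp hf hper).apply_one_le hp0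
  calc Kp p f ≤ 2 * Ip p f + 2 * Ip p f :=
        (Kp_eq_weightedIntegral_add p f).trans_le (add_le_add left_le right_le)
    _ = 4 * Ip p f := by ring

lemma mixedModulus_one_one_le_two_mul_Kp (hp : 1 ≤ p) (hf : Measurable (Function.uncurry f))
    (hper : BiPeriodic f) : mixedModulus p f 1 1 ≤ 2 * Kp p f := by
  refine ((isModulus_mixedModulus_right hp hf hper 1).apply_one_le (by linarith)).trans ?_
  rw [Kp_eq_weightedIntegral_add]
  gcongr
  exact le_add_self

lemma tsum_tsum_eq_corner_add_edges_add_interior (a : ℕ → ℕ → ℝ≥0∞) :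
    ∑' n, ∑' m, a n m = a 0 0 + (∑' n, a (n + 1) 0 + ∑' m, a 0 (m + 1))
      + ∑' n, ∑' m, a (n + 1) (m + 1) := by
  have split (b : ℕ → ℝ≥0∞) : ∑' n, b n = b 0 + ∑' n, b (n + 1) :=
    tsum_eq_zero_add' ENNReal.summable
  rw [split fun n ↦ ∑' m, a n m, split (a 0)]
  simp only [split (a (_ + 1)), ENNReal.tsum_add]
  ring

lemma scaledModulus_eq (p : ℝ) (f : ℝ → ℝ → ℝ) (n m : ℕ) :
    scaledModulus p f n m = ENNReal.ofReal (steklovScale p n)⁻¹ ^ (1 / p) *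
      (ENNReal.ofReal (steklovScale p m)⁻¹ ^ (1 / p)
        * mixedModulus p f (steklovScale p n) (steklovScale p m)) :=
  mul_assoc _ _ _

lemma tsum_tsum_scaledModulus_succ_succ_le (hp : 1 < p) (hf : Measurable (Function.uncurry f))
    (hper : BiPeriodic f) :
    ∑' n, ∑' m, scaledModulus p f (n + 1) (m + 1)
      ≤ ENNReal.ofReal (4 * (1 / (p * (p / (p - 1))))) ^ 2 * Ip p f := by
  set C := ENNReal.ofReal (4 * (1 / (p * (p / (p - 1)))))
  rw [Ip_eq_weightedIntegral, pow_two, mul_assoc]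
  calc ∑' n, ∑' m, scaledModulus p f (n + 1) (m + 1)
      ≤ ∑' n, C * (ENNReal.ofReal (steklovScale p (n + 1))⁻¹ ^ (1 / p)
          * weightedIntegral p (mixedModulus p f (steklovScale p (n + 1)))) := by
        refine ENNReal.tsum_le_tsum fun n ↦ ?_
        simp only [scaledModulus_eq]
        rw [ENNReal.tsum_mul_left, mul_left_comm]
        gcongr
        exact (isModulus_mixedModulus_right hp.le hf hper _).tsum_le_weightedIntegral hp
    _ ≤ _ := by
        rw [ENNReal.tsum_mul_left]
        gcongr
        exact (isModulus_weightedIntegral_mixedModulus hp.le hf hper).tsum_le_weightedIntegral hp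

lemma tsum_tsum_scaledModulus_le (hp : 1 < p) (hf : Measurable (Function.uncurry f))
    (hper : BiPeriodic f) :
    ∑' n, ∑' m, scaledModulus p f n m ≤ mixedModulus p f 1 1
      + ENNReal.ofReal (4 * (1 / (p * (p / (p - 1))))) * Kp p f
      + ENNReal.ofReal (4 * (1 / (p * (p / (p - 1))))) ^ 2 * Ip p f := by
  rw [tsum_tsum_eq_corner_add_edges_add_interior, Kp_eq_weightedIntegral_add, mul_add]
  gcongr
  · simp [scaledModulus_eq, steklovScale_zero]
  · simpa [scaledModulus_eq, steklovScale_zero] using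
      (isModulus_mixedModulus_left hp.le hf hper 1).tsum_le_weightedIntegral hp
  · simpa [scaledModulus_eq, steklovScale_zero] using
      (isModulus_mixedModulus_right hp.le hf hper 1).tsum_le_weightedIntegral hp
  · exact tsum_tsum_scaledModulus_succ_succ_le hp hf hper

lemma tsum_tsum_add_le (a : ℕ → ℕ → ℝ≥0∞) (i j : ℕ) :
    ∑' n, ∑' m, a (n + i) (m + j) ≤ ∑' n, ∑' m, a n m :=
  calc ∑' n, ∑' m, a (n + i) (m + j) ≤ ∑' n, ∑' m, a (n + i) m :=
        ENNReal.tsum_le_tsum fun _ ↦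
          ENNReal.tsum_comp_le_tsum_of_injective (add_left_injective j) _
    _ ≤ ∑' n, ∑' m, a n m :=
        ENNReal.tsum_comp_le_tsum_of_injective (add_left_injective i) fun n ↦ ∑' m, a n m

lemma tsum_scaleBound_le_tsum_scaledModulus (p : ℝ) (f : ℝ → ℝ → ℝ) :
    ∑' z : ℕ × ℕ, scaleBound p f z.1 z.2 ≤ 4096 * ∑' n, ∑' m, scaledModulus p f n m := by
  set S := ∑' n, ∑' m, scaledModulus p f n m
  rw [ENNReal.tsum_prod]
  simp only [scaleBound, ENNReal.tsum_mul_left, Finset.sum_range_succ, Finset.sum_range_zero,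
    zero_add, ENNReal.tsum_add]
  calc _ ≤ 1024 * (S + S + (S + S)) := by gcongr <;> apply tsum_tsum_add_le
    _ = 4096 * S := by ring

/-- The right-hand side `ω(f;1,1)_p + K_p(f)/(pp') + I_p(f)/(pp')²` of the variation estimate. -/
noncomputable def modulusBound (p : ℝ) (f : ℝ → ℝ → ℝ) : ℝ≥0∞ :=
  mixedModulus p f 1 1 + ENNReal.ofReal (1 / (p * (p / (p - 1)))) * Kp p f
    + ENNReal.ofReal ((1 / (p * (p / (p - 1)))) ^ 2) * Ip p f

lemma tsum_scaleBound_le (hp : 1 < p) (hf : Measurable (Function.uncurry f))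
    (hper : BiPeriodic f) :
    ∑' z : ℕ × ℕ, scaleBound p f z.1 z.2 ≤ ENNReal.ofReal 65536 * modulusBound p f := by
  have : 0 < p - 1 := by linarith
  have factor_four : ENNReal.ofReal (4 * (1 / (p * (p / (p - 1)))))
      = 4 * ENNReal.ofReal (1 / (p * (p / (p - 1)))) := by
    rw [ENNReal.ofReal_mul (by norm_num), ENNReal.ofReal_ofNat]
  have sums_le := tsum_tsum_scaledModulus_le hp hf hper
  rw [factor_four] at sums_le
  rw [modulusBound, ENNReal.ofReal_pow (by positivity), ENNReal.ofReal_ofNat]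
  set C := ENNReal.ofReal (1 / (p * (p / (p - 1))))
  calc _ ≤ 4096 * (mixedModulus p f 1 1 + 4 * C * Kp p f + (4 * C) ^ 2 * Ip p f) :=
        (tsum_scaleBound_le_tsum_scaledModulus p f).trans (mul_le_mul_right sums_le _)
    _ = 4096 * mixedModulus p f 1 1 + 16384 * (C * Kp p f) + 65536 * (C ^ 2 * Ip p f) := by ring
    _ ≤ 65536 * mixedModulus p f 1 1 + 65536 * (C * Kp p f) + 65536 * (C ^ 2 * Ip p f) := by
        gcongr <;> norm_num
    _ = 65536 * (mixedModulus p f 1 1 + C * Kp p f + C ^ 2 * Ip p f) := by ring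

lemma modulusBound_lt_top (hp : 1 ≤ p) (hf : Measurable (Function.uncurry f))
    (hper : BiPeriodic f) (hI : Ip p f < ⊤) : modulusBound p f < ⊤ := by
  have hK : Kp p f < ⊤ :=
    (Kp_le_four_mul_Ip hp hf hper).trans_lt (ENNReal.mul_lt_top (by simp) hI)
  have hω : mixedModulus p f 1 1 < ⊤ :=
    (mixedModulus_one_one_le_two_mul_Kp hp hf hper).trans_lt (ENNReal.mul_lt_top (by simp) hK)
  unfold modulusBound
  finiteness

lemma tsum_scaleBound_lt_top (hp : 1 < p) (hf : Measurable (Function.uncurry f))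
    (hper : BiPeriodic f) (hI : Ip p f < ⊤) : ∑' z : ℕ × ℕ, scaleBound p f z.1 z.2 < ⊤ :=
  (tsum_scaleBound_le hp hf hper).trans_lt <|
    ENNReal.mul_lt_top ENNReal.ofReal_lt_top (modulusBound_lt_top hp.le hf hper hI)

end ScaleSums

section DoubleSteklov

/-- The average of `f` over the rectangle `(x, x + h] × (y, y + k]`. -/
noncomputable def steklov2 (h k : ℝ) (f : ℝ → ℝ → ℝ) (x y : ℝ) : ℝ :=
  steklov h (fun x' ↦ steklov k (f x') y) x

variable {f : ℝ → ℝ → ℝ} {h k : ℝ}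

lemma locallyIntegrable_uncurry_swap (hf : LocallyIntegrable (Function.uncurry f)) :
    LocallyIntegrable (Function.uncurry fun y x ↦ f x y) := by
  refine locallyIntegrable_iff.2 fun K hK ↦ ?_
  have preserving : MeasurePreserving (Prod.swap : ℝ × ℝ → ℝ × ℝ) volume volume :=
    Measure.measurePreserving_swap
  rw [← preimage_image_eq K Prod.swap_injective]
  exact (preserving.integrableOn_comp_preimage
    MeasurableEquiv.prodComm.measurableEmbedding).2
      (hf.integrableOn_isCompact (hK.image continuous_swap))

lemma steklov2_swap (hf : LocallyIntegrable (Function.uncurry f)) (hh : 0 < h) (hk : 0 < k)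
    (x y : ℝ) : steklov2 h k f x y = steklov2 k h (fun y x ↦ f x y) y x := by
  refine integral_integral_swap ?_
  rw [uniformMeasure, uniformMeasure, Measure.prod_smul_right, Measure.prod_smul_left]
  exact ((integrable_comp_add_restrict_prod_restrict hf x y 0 h 0 k).smul_measure
    (by simpa using hh)).smul_measure (by simpa using hk)

lemma steklov_eq_setIntegral (hh : 0 ≤ h) (w : ℝ → ℝ) (x : ℝ) :
    steklov h w x = h⁻¹ * ∫ s in Ioc x (x + h), w s := by
  rw [steklov, integral_uniformMeasure hh, intervalIntegral.integral_comp_add_left, add_zero,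
    intervalIntegral.integral_of_le (by linarith)]

lemma steklov2_eq_setIntegral (hf : LocallyIntegrable (Function.uncurry f)) (hh : 0 ≤ h)
    (hk : 0 ≤ k) (x y : ℝ) :
    steklov2 h k f x y
      = h⁻¹ * k⁻¹ * ∫ z in Ioc x (x + h) ×ˢ Ioc y (y + k), Function.uncurry f z := by
  have integrableOn : IntegrableOn (Function.uncurry f) (Ioc x (x + h) ×ˢ Ioc y (y + k)) :=
    (hf.integrableOn_isCompact (isCompact_Icc.prod isCompact_Icc)).mono_set
      (prod_mono Ioc_subset_Icc_self Ioc_subset_Icc_self)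
  rw [Measure.volume_eq_prod] at integrableOn ⊢
  simp only [steklov2, steklov_eq_setIntegral hh, steklov_eq_setIntegral hk,
    setIntegral_prod _ integrableOn, integral_const_mul, Function.uncurry_apply_pair, mul_assoc]

lemma eventually_mem_Ioc_add_iff {x z : ℝ} (hz : z ≠ x) (hzh : z ≠ x + h) :
    ∀ᶠ x' in nhds x, z ∈ Ioc x' (x' + h) ↔ z ∈ Ioc x (x + h) := by
  have left : ∀ᶠ x' in nhds x, x' < z ↔ x < z := by
    rcases hz.lt_or_gt with hlt | hgt
    · filter_upwards [lt_mem_nhds hlt] with x' hx'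
      exact iff_of_false hx'.le.not_gt hlt.le.not_gt
    · filter_upwards [gt_mem_nhds hgt] with x' hx'
      exact iff_of_true hx' hgt
  have right : ∀ᶠ x' in nhds x, z ≤ x' + h ↔ z ≤ x + h := by
    have tendsto : Tendsto (· + h) (nhds x) (nhds (x + h)) := (continuous_add_const h).tendsto x
    rcases hzh.lt_or_gt with hlt | hgt
    · filter_upwards [tendsto.eventually (lt_mem_nhds hlt)] with x' hx'
      exact iff_of_true hx'.le hlt.le
    · filter_upwards [tendsto.eventually (gt_mem_nhds hgt)] with x' hx'
      exact iff_of_false hx'.not_ge hgt.not_ge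
  filter_upwards [left, right] with x' hleft hright
  rw [mem_Ioc, mem_Ioc, hleft, hright]

lemma ae_continuousAt_indicator_Ioc_prod_Ioc (F : ℝ × ℝ → ℝ) (h k : ℝ) (w : ℝ × ℝ) :
    ∀ᵐ z, ContinuousAt
      (fun w' : ℝ × ℝ ↦ (Ioc w'.1 (w'.1 + h) ×ˢ Ioc w'.2 (w'.2 + k)).indicator F z) w := by
  have fst_ne (a : ℝ) : ∀ᵐ z : ℝ × ℝ, z.1 ≠ a :=
    Measure.quasiMeasurePreserving_fst.ae (Measure.ae_ne volume a)
  have snd_ne (a : ℝ) : ∀ᵐ z : ℝ × ℝ, z.2 ≠ a :=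
    Measure.quasiMeasurePreserving_snd.ae (Measure.ae_ne volume a)
  filter_upwards [fst_ne w.1, fst_ne (w.1 + h), snd_ne w.2, snd_ne (w.2 + k)]
    with z left_ne right_ne bot_ne top_ne
  refine continuousAt_const.congr (f := fun _ ↦
    (Ioc w.1 (w.1 + h) ×ˢ Ioc w.2 (w.2 + k)).indicator F z) ?_
  filter_upwards [continuousAt_fst.eventually (eventually_mem_Ioc_add_iff left_ne right_ne),
    continuousAt_snd.eventually (eventually_mem_Ioc_add_iff bot_ne top_ne)] with w' hfst hsnd
  simp only [indicator, mem_prod, hfst, hsnd]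

lemma continuous_setIntegral_Ioc_prod_Ioc {F : ℝ × ℝ → ℝ} (hF : LocallyIntegrable F) (h k : ℝ) :
    Continuous fun w : ℝ × ℝ ↦ ∫ z in Ioc w.1 (w.1 + h) ×ˢ Ioc w.2 (w.2 + k), F z := by
  simp only [← integral_indicator (measurableSet_Ioc.prod measurableSet_Ioc)]
  refine continuous_iff_continuousAt.2 fun w ↦ ?_
  set B : Set (ℝ × ℝ) := Icc (w.1 - 1) (w.1 + 1 + h) ×ˢ Icc (w.2 - 1) (w.2 + 1 + k)
  refine continuousAt_of_dominated (bound := B.indicator fun z ↦ ‖F z‖) ?_ ?_ ?_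
    (ae_continuousAt_indicator_Ioc_prod_Ioc F h k w)
  · exact Eventually.of_forall fun w' ↦
      hF.aestronglyMeasurable.indicator (measurableSet_Ioc.prod measurableSet_Ioc)
  · filter_upwards [continuousAt_fst.eventually (Icc_mem_nhds (sub_one_lt w.1) (lt_add_one w.1)),
      continuousAt_snd.eventually (Icc_mem_nhds (sub_one_lt w.2) (lt_add_one w.2))]
      with w' hfst hsnd
    refine Eventually.of_forall fun z ↦ ?_
    rw [norm_indicator_eq_indicator_norm]
    refine indicator_le_indicator_of_subset (Set.prod_mono ?_ ?_) (fun z ↦ norm_nonneg _) z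
    · exact fun r hr ↦ ⟨hfst.1.trans hr.1.le, hr.2.trans (add_le_add_left hfst.2 h)⟩
    · exact fun r hr ↦ ⟨hsnd.1.trans hr.1.le, hr.2.trans (add_le_add_left hsnd.2 k)⟩
  · rw [integrable_indicator_iff (measurableSet_Icc.prod measurableSet_Icc)]
    exact (hF.integrableOn_isCompact (isCompact_Icc.prod isCompact_Icc)).norm

lemma continuous_steklov2 (hf : LocallyIntegrable (Function.uncurry f)) (hh : 0 ≤ h)
    (hk : 0 ≤ k) : Continuous (Function.uncurry (steklov2 h k f)) := by
  have continuous_box := continuous_setIntegral_Ioc_prod_Ioc hf h k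
  exact (continuous_box.const_mul (h⁻¹ * k⁻¹)).congr fun z ↦
    (steklov2_eq_setIntegral hf hh hk z.1 z.2).symm

lemma steklov_one {w : ℝ → ℝ} (hw : Function.Periodic w 1) (x : ℝ) :
    steklov 1 w x = ∫ s in (0 : ℝ)..1, w s := by
  rw [steklov, integral_uniformMeasure zero_le_one, intervalIntegral.integral_comp_add_left,
    add_zero, inv_one, one_mul, hw.intervalIntegral_add_eq x 0, zero_add]

lemma steklov2_one_right (hf : BiPeriodic f) (h x y : ℝ) :
    steklov2 h 1 f x y = steklov h (fun x' ↦ ∫ t in (0 : ℝ)..1, f x' t) x := by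
  simp only [steklov2, steklov_one (fun t ↦ hf.2 _ t) y]

lemma locallyIntegrable_integral_section (hf : LocallyIntegrable (Function.uncurry f)) :
    LocallyIntegrable fun x ↦ ∫ t in (0 : ℝ)..1, f x t := by
  have := locallyIntegrable_steklov_section hf one_pos 0
  simpa [steklov, integral_uniformMeasure zero_le_one] using this

end DoubleSteklov

section LebesgueDifferentiation

variable {ι : Type*} {l : Filter ι} {h : ι → ℝ} {f : ℝ → ℝ → ℝ}

lemma tendsto_half_nhdsGT_zero (hh : Tendsto h l (nhdsWithin 0 (Ioi 0))) :
    Tendsto (fun i ↦ h i / 2) l (nhdsWithin 0 (Ioi 0)) := by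
  obtain ⟨to_zero, pos⟩ := tendsto_nhdsWithin_iff.1 hh
  exact tendsto_nhdsWithin_iff.2
    ⟨by simpa using to_zero.div_const 2, pos.mono fun i hi ↦ mem_Ioi.2 (half_pos hi)⟩

lemma Icc_eq_closedBall_half (x h : ℝ) :
    Icc x (x + h) = Metric.closedBall (x + h / 2) (h / 2) := by
  rw [Real.closedBall_eq_Icc, add_sub_cancel_right, add_assoc, add_halves]

lemma ae_tendsto_steklov {w : ℝ → ℝ} (hw : LocallyIntegrable w)
    (hh : Tendsto h l (nhdsWithin 0 (Ioi 0))) :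
    ∀ᵐ x, Tendsto (fun i ↦ steklov (h i) w x) l (nhds (w x)) := by
  have pos : ∀ᶠ i in l, 0 < h i := (tendsto_nhdsWithin_iff.1 hh).2
  filter_upwards [IsUnifLocDoublingMeasure.ae_tendsto_average volume hw 1] with x hx
  refine (hx (fun i ↦ x + h i / 2) (fun i ↦ h i / 2) (tendsto_half_nhdsGT_zero hh)
    (pos.mono fun i hi ↦ ?_)).congr' (pos.mono fun i hi ↦ ?_)
  · rw [one_mul, ← Icc_eq_closedBall_half]
    exact ⟨le_rfl, by linarith⟩
  · beta_reduce
    rw [← Icc_eq_closedBall_half, setAverage_eq, ← restrict_Ioc_eq_restrict_Icc,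
      steklov_eq_setIntegral hi.le, smul_eq_mul, Real.volume_real_Icc_of_le (by linarith),
      add_sub_cancel_left]

lemma ae_tendsto_steklov2 (hf : LocallyIntegrable (Function.uncurry f))
    (hh : Tendsto h l (nhdsWithin 0 (Ioi 0))) :
    ∀ᵐ z : ℝ × ℝ, Tendsto (fun i ↦ steklov2 (h i) (h i) f z.1 z.2) l (nhds (f z.1 z.2)) := by
  have pos : ∀ᶠ i in l, 0 < h i := (tendsto_nhdsWithin_iff.1 hh).2
  filter_upwards [IsUnifLocDoublingMeasure.ae_tendsto_average volume hf 1] with z hz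
  refine (hz (fun i ↦ (z.1 + h i / 2, z.2 + h i / 2)) (fun i ↦ h i / 2)
    (tendsto_half_nhdsGT_zero hh) (pos.mono fun i hi ↦ ?_)).congr' (pos.mono fun i hi ↦ ?_)
  · rw [one_mul, ← closedBall_prod_same, ← Icc_eq_closedBall_half, ← Icc_eq_closedBall_half]
    exact ⟨⟨le_rfl, by linarith⟩, ⟨le_rfl, by linarith⟩⟩
  · beta_reduce
    rw [← closedBall_prod_same, ← Icc_eq_closedBall_half, ← Icc_eq_closedBall_half, setAverage_eq,
      steklov2_eq_setIntegral hf hi.le hi.le, Measure.volume_eq_prod, ← Measure.prod_restrict,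
      ← Measure.prod_restrict, restrict_Ioc_eq_restrict_Icc, restrict_Ioc_eq_restrict_Icc,
      measureReal_prod_prod, Real.volume_real_Icc_of_le (by linarith),
      Real.volume_real_Icc_of_le (by linarith), add_sub_cancel_left, add_sub_cancel_left,
      mul_inv, smul_eq_mul]

lemma ae_tendsto_mixed_steklov2 (hf : LocallyIntegrable (Function.uncurry f))
    (hper : BiPeriodic f) (hh : Tendsto h l (nhdsWithin 0 (Ioi 0))) :
    ∀ᵐ z : ℝ × ℝ, Tendsto (fun i ↦
        (steklov2 (h i) (h i) f z.1 z.2 - steklov2 (h i) 1 f z.1 z.2)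
          - (steklov2 1 (h i) f z.1 z.2 - steklov2 1 1 f z.1 z.2)) l
      (nhds ((f z.1 z.2 - ∫ t in (0 : ℝ)..1, f z.1 t)
        - ((∫ s in (0 : ℝ)..1, f s z.2) - ∫ s in (0 : ℝ)..1, ∫ t in (0 : ℝ)..1, f s t))) := by
  have pos : ∀ᶠ i in l, 0 < h i := (tendsto_nhdsWithin_iff.1 hh).2
  have mean_left := Measure.quasiMeasurePreserving_fst (ν := (volume : Measure ℝ)).ae
    (ae_tendsto_steklov (locallyIntegrable_integral_section hf) hh)
  have mean_right := Measure.quasiMeasurePreserving_snd (μ := (volume : Measure ℝ)).ae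
    (ae_tendsto_steklov (locallyIntegrable_integral_section
      (locallyIntegrable_uncurry_swap hf)) hh)
  filter_upwards [ae_tendsto_steklov2 hf hh, mean_left, mean_right] with z hz hfst hsnd
  have total : steklov2 1 1 f z.1 z.2 = ∫ s in (0 : ℝ)..1, ∫ t in (0 : ℝ)..1, f s t := by
    rw [steklov2_one_right hper, steklov_one]
    exact fun x ↦ by simp only [hper.1]
  rw [total]
  simp only [steklov2_one_right hper]
  refine (hz.sub hfst).sub (Tendsto.sub_const (hsnd.congr' (pos.mono fun i hi ↦ ?_)) _)
  rw [steklov2_swap hf one_pos hi, steklov2_one_right hper.swap]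

end LebesgueDifferentiation

section Minkowski

variable {p : ℝ} {ι κ E : Type*} [NormedAddCommGroup E] {a : κ → ι → E} {M : κ → ℝ≥0∞}

lemma rpow_one_div_le_of_le_rpow (hp : 0 < p) {c d : ℝ≥0∞} (hcd : c ≤ d ^ p) :
    c ^ (1 / p) ≤ d := by
  rwa [one_div, ENNReal.rpow_inv_le_iff hp]

lemma sum_enorm_sum_rpow_le (hp : 1 ≤ p) (s : Finset ι)
    (hM : ∀ k, ∑ i ∈ s, ‖a k i‖ₑ ^ p ≤ M k ^ p) (F : Finset κ) :
    (∑ i ∈ s, ‖∑ k ∈ F, a k i‖ₑ ^ p) ^ (1 / p) ≤ ∑ k ∈ F, M k := by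
  classical
  have hp0 : 0 < p := by linarith
  induction F using Finset.induction_on with
  | empty => simp [ENNReal.zero_rpow_of_pos, hp0]
  | insert k F hk ih =>
    simp only [Finset.sum_insert hk]
    calc (∑ i ∈ s, ‖a k i + ∑ j ∈ F, a j i‖ₑ ^ p) ^ (1 / p)
        ≤ (∑ i ∈ s, (‖a k i‖ₑ + ‖∑ j ∈ F, a j i‖ₑ) ^ p) ^ (1 / p) := by
          gcongr
          exact enorm_add_le _ _
      _ ≤ (∑ i ∈ s, ‖a k i‖ₑ ^ p) ^ (1 / p) + (∑ i ∈ s, ‖∑ j ∈ F, a j i‖ₑ ^ p) ^ (1 / p) :=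
          ENNReal.Lp_add_le s _ _ hp
      _ ≤ M k + ∑ j ∈ F, M j := add_le_add (rpow_one_div_le_of_le_rpow hp0 (hM k)) ih

lemma sum_enorm_rpow_le_of_hasSum (hp : 1 ≤ p) (s : Finset ι)
    (hM : ∀ k, ∑ i ∈ s, ‖a k i‖ₑ ^ p ≤ M k ^ p) {b : ι → E}
    (hb : ∀ i, HasSum (fun k ↦ a k i) (b i)) :
    ∑ i ∈ s, ‖b i‖ₑ ^ p ≤ (∑' k, M k) ^ p := by
  have hp0 : 0 < p := by linarith
  have tendsto : Tendsto (fun F : Finset κ ↦ ∑ i ∈ s, ‖∑ k ∈ F, a k i‖ₑ ^ p) atTop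
      (nhds (∑ i ∈ s, ‖b i‖ₑ ^ p)) :=
    tendsto_finsetSum _ fun i _ ↦
      (ENNReal.continuous_rpow_const.tendsto _).comp ((continuous_enorm.tendsto _).comp (hb i))
  refine le_of_tendsto' tendsto fun F ↦ ?_
  rw [← ENNReal.rpow_inv_le_iff hp0, ← one_div]
  exact (sum_enorm_sum_rpow_le hp s hM F).trans (ENNReal.sum_le_tsum F)

end Minkowski

section SteklovSeries

/-- The sum over all pairs of scales of the mixed differences of double Steklov averages. Under
summability of the scale bounds it is the continuous representative of `f` up to functions of one
variable. -/
noncomputable def steklovSeries (p : ℝ) (f : ℝ → ℝ → ℝ) (x y : ℝ) : ℝ :=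
  ∑' z : ℕ × ℕ, steklovDiff2 p z.1 z.2 f x y

variable {p : ℝ} {f : ℝ → ℝ → ℝ}

lemma tendsto_steklovScale (hp : 1 < p) :
    Tendsto (steklovScale p) atTop (nhdsWithin 0 (Ioi 0)) := by
  have : 0 < p - 1 := by linarith
  have exponent_pos : 0 < p * (p / (p - 1)) := by positivity
  refine tendsto_nhdsWithin_iff.2 ⟨?_, Eventually.of_forall fun n ↦ steklovScale_pos p n⟩
  have eq_pow (n : ℕ) : ((2 : ℝ) ^ (-(p * (p / (p - 1))))) ^ n = steklovScale p n := by
    rw [steklovScale, Real.rpow_mul (by norm_num), Real.rpow_natCast]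
  exact (tendsto_pow_atTop_nhds_zero_of_lt_one (by positivity)
    (Real.rpow_lt_one_of_one_lt_of_neg (by norm_num) (by linarith))).congr eq_pow

lemma steklovDiff2_eq (p : ℝ) (n m : ℕ) (hf : LocallyIntegrable (Function.uncurry f)) (x y : ℝ) :
    steklovDiff2 p n m f x y
      = (steklov2 (steklovScale p (n + 1)) (steklovScale p (m + 1)) f x y
          - steklov2 (steklovScale p (n + 1)) (steklovScale p m) f x y)
        - (steklov2 (steklovScale p n) (steklovScale p (m + 1)) f x y
          - steklov2 (steklovScale p n) (steklovScale p m) f x y) := by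
  have integrable (i j : ℕ) := integrable_uniformMeasure_comp_add
    (locallyIntegrable_steklov_section hf (steklovScale_pos p j) y) (steklovScale_pos p i) x
  simp only [steklovDiff2, steklovDiff, steklov2]
  congr 1
  all_goals exact integral_sub (integrable _ _) (integrable _ _)

lemma continuous_steklovDiff2 (hf : LocallyIntegrable (Function.uncurry f)) (n m : ℕ) :
    Continuous (Function.uncurry (steklovDiff2 p n m f)) := by
  have continuous (i j : ℕ) := continuous_steklov2 hf (steklovScale_pos p i).le
    (steklovScale_pos p j).le
  exact (((continuous _ _).sub (continuous _ _)).sub ((continuous _ _).sub (continuous _ _))).congr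
    fun z ↦ (steklovDiff2_eq p n m hf z.1 z.2).symm

lemma steklovDiff2_periodic (hf : BiPeriodic f) (n m : ℕ) : BiPeriodic (steklovDiff2 p n m f) :=
  ⟨fun x y ↦ by simp only [steklovDiff2, steklovDiff, steklov, add_right_comm _ (1 : ℝ), hf.1],
    fun x y ↦ by simp only [steklovDiff2, steklovDiff, steklov, add_right_comm _ (1 : ℝ), hf.2]⟩

lemma isNet_unit (x : ℝ) : IsNet 0 1 fun i ↦ x - 1 + i where
  lt_succ i _ := by simp
  eq_add_one := by simp
  weight := Or.inr ⟨rfl, rfl⟩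

lemma enorm_steklovDiff2_le (hp : 1 < p) (hfm : Measurable (Function.uncurry f))
    (hf : LocallyIntegrable (Function.uncurry f)) (hper : BiPeriodic f) (n m : ℕ) (x y : ℝ) :
    ‖steklovDiff2 p n m f x y‖ₑ ≤ scaleBound p f n m := by
  have net_bound :=
    sum_enorm_endDiff_steklovDiff2_rpow_le hp hfm hf hper n m (isNet_unit x) (isNet_unit y)
  simp only [Finset.sum_range_one, endDiff, zero_mul, sub_zero, zero_add, Nat.cast_one,
    sub_add_cancel] at net_bound
  exact (ENNReal.rpow_le_rpow_iff (by linarith)).1 net_bound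

lemma norm_steklovDiff2_le (hp : 1 < p) (hfm : Measurable (Function.uncurry f))
    (hf : LocallyIntegrable (Function.uncurry f)) (hper : BiPeriodic f)
    (hsum : ∑' z : ℕ × ℕ, scaleBound p f z.1 z.2 ≠ ⊤) (z : ℕ × ℕ) (x y : ℝ) :
    ‖steklovDiff2 p z.1 z.2 f x y‖ ≤ (scaleBound p f z.1 z.2).toReal := by
  rw [← toReal_enorm]
  exact ENNReal.toReal_mono (ENNReal.ne_top_of_tsum_ne_top hsum z)
    (enorm_steklovDiff2_le hp hfm hf hper z.1 z.2 x y)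

lemma hasSum_steklovSeries (hp : 1 < p) (hfm : Measurable (Function.uncurry f))
    (hf : LocallyIntegrable (Function.uncurry f)) (hper : BiPeriodic f)
    (hsum : ∑' z : ℕ × ℕ, scaleBound p f z.1 z.2 ≠ ⊤) (x y : ℝ) :
    HasSum (fun z : ℕ × ℕ ↦ steklovDiff2 p z.1 z.2 f x y) (steklovSeries p f x y) :=
  (Summable.of_norm_bounded (ENNReal.summable_toReal hsum)
    fun z ↦ norm_steklovDiff2_le hp hfm hf hper hsum z x y).hasSum

lemma continuous_steklovSeries (hp : 1 < p) (hfm : Measurable (Function.uncurry f))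
    (hf : LocallyIntegrable (Function.uncurry f)) (hper : BiPeriodic f)
    (hsum : ∑' z : ℕ × ℕ, scaleBound p f z.1 z.2 ≠ ⊤) :
    Continuous (Function.uncurry (steklovSeries p f)) :=
  continuous_tsum (fun z ↦ continuous_steklovDiff2 hf z.1 z.2) (ENNReal.summable_toReal hsum)
    fun z w ↦ norm_steklovDiff2_le hp hfm hf hper hsum z w.1 w.2

lemma steklovSeries_periodic (hf : BiPeriodic f) : BiPeriodic (steklovSeries p f) :=
  ⟨fun x y ↦ by simp only [steklovSeries, (steklovDiff2_periodic hf _ _).1],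
    fun x y ↦ by simp only [steklovSeries, (steklovDiff2_periodic hf _ _).2]⟩

lemma sum_enorm_endDiff_steklovSeries_rpow_le (hp : 1 < p) (hfm : Measurable (Function.uncurry f))
    (hf : LocallyIntegrable (Function.uncurry f)) (hper : BiPeriodic f)
    (hsum : ∑' z : ℕ × ℕ, scaleBound p f z.1 z.2 ≠ ⊤) {ε δ : ℝ} {M N : ℕ} {x y : ℕ → ℝ}
    (hx : IsNet ε M x) (hy : IsNet δ N y) :
    ∑ i ∈ Finset.range M, ∑ j ∈ Finset.range N,
        ‖endDiff ε (x i) (x (i + 1)) fun r ↦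
          endDiff δ (y j) (y (j + 1)) (steklovSeries p f r)‖ₑ ^ p
      ≤ (∑' z : ℕ × ℕ, scaleBound p f z.1 z.2) ^ p := by
  have hasSum := hasSum_steklovSeries hp hfm hf hper hsum
  rw [← Finset.sum_product']
  refine sum_enorm_rpow_le_of_hasSum hp.le _ (a := fun z i ↦
    endDiff ε (x i.1) (x (i.1 + 1)) fun r ↦
      endDiff δ (y i.2) (y (i.2 + 1)) (steklovDiff2 p z.1 z.2 f r)) (fun z ↦ ?_) fun i ↦ ?_
  · rw [Finset.sum_product]
    exact sum_enorm_endDiff_steklovDiff2_rpow_le hp hfm hf hper z.1 z.2 hx hy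
  · exact ((hasSum _ _).sub ((hasSum _ _).mul_left δ)).sub
      (((hasSum _ _).sub ((hasSum _ _).mul_left δ)).mul_left ε)

lemma ofReal_sum_abs_rpow (hp : 0 < p) {ι : Type*} (s : Finset ι) (a : ι → ℝ) :
    ENNReal.ofReal ((∑ i ∈ s, |a i| ^ p) ^ (1 / p)) = (∑ i ∈ s, ‖a i‖ₑ ^ p) ^ (1 / p) := by
  rw [← ENNReal.ofReal_rpow_of_nonneg (Finset.sum_nonneg fun i _ ↦ by positivity) (by positivity),
    ENNReal.ofReal_sum_of_nonneg fun i _ ↦ by positivity]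
  simp only [ofReal_abs_rpow hp.le]

lemma vp2_steklovSeries_le (hp : 1 < p) (hfm : Measurable (Function.uncurry f))
    (hf : LocallyIntegrable (Function.uncurry f)) (hper : BiPeriodic f)
    (hsum : ∑' z : ℕ × ℕ, scaleBound p f z.1 z.2 ≠ ⊤) :
    vp2 p (steklovSeries p f) ≤ ∑' z : ℕ × ℕ, scaleBound p f z.1 z.2 := by
  have hp0 : 0 < p := by linarith
  simp only [vp2, iSup_le_iff]
  intro m n x y hx hxm hy hyn
  rw [← Finset.sum_product', ofReal_sum_abs_rpow hp0]
  refine rpow_one_div_le_of_le_rpow hp0 (le_of_eq_of_le ?_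
    (sum_enorm_endDiff_steklovSeries_rpow_le hp hfm hf hper hsum
      ⟨hx, hxm, Or.inl rfl⟩ ⟨hy, hyn, Or.inl rfl⟩))
  rw [Finset.sum_product]
  simp only [endDiff, one_mul]
  refine Finset.sum_congr rfl fun i _ ↦ Finset.sum_congr rfl fun j _ ↦ ?_
  congr 2
  ring

lemma vp_steklovSeries_left_le (hp : 1 < p) (hfm : Measurable (Function.uncurry f))
    (hf : LocallyIntegrable (Function.uncurry f)) (hper : BiPeriodic f)
    (hsum : ∑' z : ℕ × ℕ, scaleBound p f z.1 z.2 ≠ ⊤) (x : ℝ) :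
    vp p (steklovSeries p f x) ≤ ∑' z : ℕ × ℕ, scaleBound p f z.1 z.2 := by
  have hp0 : 0 < p := by linarith
  simp only [vp, iSup_le_iff]
  intro n y hy hyn
  rw [ofReal_sum_abs_rpow hp0]
  refine rpow_one_div_le_of_le_rpow hp0 ?_
  simpa [endDiff] using sum_enorm_endDiff_steklovSeries_rpow_le hp hfm hf hper hsum
    (isNet_unit x) ⟨hy, hyn, Or.inl rfl⟩

lemma vp_steklovSeries_right_le (hp : 1 < p) (hfm : Measurable (Function.uncurry f))
    (hf : LocallyIntegrable (Function.uncurry f)) (hper : BiPeriodic f)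
    (hsum : ∑' z : ℕ × ℕ, scaleBound p f z.1 z.2 ≠ ⊤) (y : ℝ) :
    vp p (fun x ↦ steklovSeries p f x y) ≤ ∑' z : ℕ × ℕ, scaleBound p f z.1 z.2 := by
  have hp0 : 0 < p := by linarith
  simp only [vp, iSup_le_iff]
  intro n x hx hxn
  rw [ofReal_sum_abs_rpow hp0]
  refine rpow_one_div_le_of_le_rpow hp0 ?_
  simpa [endDiff] using sum_enorm_endDiff_steklovSeries_rpow_le hp hfm hf hper hsum
    ⟨hx, hxn, Or.inl rfl⟩ (isNet_unit y)

lemma memHp2_steklovSeries (hp : 1 < p) (hfm : Measurable (Function.uncurry f))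
    (hf : LocallyIntegrable (Function.uncurry f)) (hper : BiPeriodic f)
    (hsum : ∑' z : ℕ × ℕ, scaleBound p f z.1 z.2 ≠ ⊤) : MemHp2 p (steklovSeries p f) :=
  ⟨(vp2_steklovSeries_le hp hfm hf hper hsum).trans_lt hsum.lt_top,
    fun x ↦ (vp_steklovSeries_left_le hp hfm hf hper hsum x).trans_lt hsum.lt_top,
    fun y ↦ (vp_steklovSeries_right_le hp hfm hf hper hsum y).trans_lt hsum.lt_top⟩

lemma sum_steklovDiff2_range_prod_range (p : ℝ) (hf : LocallyIntegrable (Function.uncurry f))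
    (N : ℕ) (x y : ℝ) :
    ∑ z ∈ Finset.range N ×ˢ Finset.range N, steklovDiff2 p z.1 z.2 f x y
      = (steklov2 (steklovScale p N) (steklovScale p N) f x y
          - steklov2 (steklovScale p N) 1 f x y)
        - (steklov2 1 (steklovScale p N) f x y - steklov2 1 1 f x y) := by
  have inner (n : ℕ) : ∑ m ∈ Finset.range N, steklovDiff2 p n m f x y
      = (steklov2 (steklovScale p (n + 1)) (steklovScale p N) f x y
          - steklov2 (steklovScale p (n + 1)) 1 f x y)
        - (steklov2 (steklovScale p n) (steklovScale p N) f x y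
          - steklov2 (steklovScale p n) 1 f x y) := by
    simp only [steklovDiff2_eq p _ _ hf]
    rw [Finset.sum_sub_distrib,
      Finset.sum_range_sub fun m ↦ steklov2 (steklovScale p (n + 1)) (steklovScale p m) f x y,
      Finset.sum_range_sub fun m ↦ steklov2 (steklovScale p n) (steklovScale p m) f x y,
      steklovScale_zero]
  simp only [Finset.sum_product, inner]
  rw [Finset.sum_range_sub fun n ↦ steklov2 (steklovScale p n) (steklovScale p N) f x y
    - steklov2 (steklovScale p n) 1 f x y, steklovScale_zero]

lemma tendsto_range_prod_range_atTop :
    Tendsto (fun N : ℕ ↦ Finset.range N ×ˢ Finset.range N) atTop atTop := by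
  refine tendsto_atTop_finset_of_monotone (fun a b hab ↦ ?_) fun z ↦ ⟨max z.1 z.2 + 1, ?_⟩
  · exact Finset.product_subset_product (Finset.range_mono hab) (Finset.range_mono hab)
  · simp only [Finset.mem_product, Finset.mem_range]
    omega

lemma ae_steklovSeries_eq (hp : 1 < p) (hfm : Measurable (Function.uncurry f))
    (hf : LocallyIntegrable (Function.uncurry f)) (hper : BiPeriodic f)
    (hsum : ∑' z : ℕ × ℕ, scaleBound p f z.1 z.2 ≠ ⊤) :
    ∀ᵐ z : ℝ × ℝ, steklovSeries p f z.1 z.2 = (f z.1 z.2 - ∫ t in (0 : ℝ)..1, f z.1 t)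
      - ((∫ s in (0 : ℝ)..1, f s z.2) - ∫ s in (0 : ℝ)..1, ∫ t in (0 : ℝ)..1, f s t) := by
  filter_upwards [ae_tendsto_mixed_steklov2 hf hper (tendsto_steklovScale hp)] with z hz
  refine tendsto_nhds_unique ?_ hz
  exact ((hasSum_steklovSeries hp hfm hf hper hsum z.1 z.2).comp
    tendsto_range_prod_range_atTop).congr fun N ↦ sum_steklovDiff2_range_prod_range p hf N z.1 z.2

end SteklovSeries

section Decomposition

variable {p : ℝ} {f : ℝ → ℝ → ℝ}

lemma MemLp2.lintegral_lt_top (hp : 1 < p) (hf : MemLp2 p f) :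
    ∫⁻ x in Icc (0 : ℝ) 1, ∫⁻ y in Icc (0 : ℝ) 1, ‖f x y‖ₑ < ⊤ := by
  obtain ⟨hfm, -, hfin⟩ := hf
  have hp0 : 0 < p := by linarith
  have : IsProbabilityMeasure (volume.restrict (Icc (0 : ℝ) 1)) := ⟨by simp⟩
  have hmeas : Measurable fun z : ℝ × ℝ ↦ ‖f z.1 z.2‖ₑ := hfm.enorm
  rw [lpNorm2_eq_lintegral_prod hp0.le hfm,
    ENNReal.rpow_lt_top_iff_of_pos (one_div_pos.2 hp0)] at hfin
  have jensen := (rpow_lintegral_le_of_isProbabilityMeasure hp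
    ((volume.restrict (Icc (0 : ℝ) 1)).prod (volume.restrict (Icc (0 : ℝ) 1)))
    hmeas.aemeasurable).trans_lt hfin
  rwa [ENNReal.rpow_lt_top_iff_of_pos hp0, lintegral_prod _ hmeas.aemeasurable] at jensen

lemma BiPeriodic.locallyIntegrable (hper : BiPeriodic f) (hfm : Measurable (Function.uncurry f))
    (hfin : ∫⁻ x in Icc (0 : ℝ) 1, ∫⁻ y in Icc (0 : ℝ) 1, ‖f x y‖ₑ < ⊤) :
    LocallyIntegrable (Function.uncurry f) := by
  rintro ⟨x, y⟩
  have unit_nhds (a : ℝ) : Ioc (a - 1 / 2) (a - 1 / 2 + 1) ∈ nhds a :=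
    Ioc_mem_nhds (by linarith) (by linarith)
  refine ⟨_, prod_mem_nhds (unit_nhds x) (unit_nhds y), hfm.aestronglyMeasurable, ?_⟩
  rw [HasFiniteIntegral, Measure.volume_eq_prod, ← Measure.prod_restrict,
    lintegral_prod _ hfm.enorm.aemeasurable]
  have section_periodic (r : ℝ) : Function.Periodic (fun q ↦ ‖f r q‖ₑ) 1 := fun q ↦ by
    simp only [hper.2]
  simpa only [Function.uncurry_apply_pair,
    setLIntegral_Ioc_add_one_of_periodic (section_periodic _), setLIntegral_Ioc_add_one_of_periodic
      (F := fun r ↦ ∫⁻ q in Icc (0 : ℝ) 1, ‖f r q‖ₑ) fun r ↦ by simp only [hper.1]] using hfin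

lemma ae_steklovSeries_eq_of_ae_mean_eq_zero (hp : 1 < p) (hfm : Measurable (Function.uncurry f))
    (hf : LocallyIntegrable (Function.uncurry f)) (hper : BiPeriodic f)
    (hsum : ∑' z : ℕ × ℕ, scaleBound p f z.1 z.2 ≠ ⊤)
    (mean_snd : ∀ᵐ x : ℝ, ∫ t in (0 : ℝ)..1, f x t = 0)
    (mean_fst : ∀ᵐ y : ℝ, ∫ t in (0 : ℝ)..1, f t y = 0) :
    ∀ᵐ z : ℝ × ℝ, steklovSeries p f z.1 z.2 = f z.1 z.2 := by
  have double_mean : ∫ s in (0 : ℝ)..1, ∫ t in (0 : ℝ)..1, f s t = 0 :=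
    intervalIntegral.integral_zero_ae (mean_snd.mono fun _ hx _ ↦ hx)
  filter_upwards [ae_steklovSeries_eq hp hfm hf hper hsum,
    Measure.quasiMeasurePreserving_fst.ae mean_snd,
    Measure.quasiMeasurePreserving_snd.ae mean_fst] with z series_eq mean_left mean_right
  rw [series_eq, mean_left, mean_right, double_mean, sub_zero, sub_zero, sub_zero]

end Decomposition

theorem statement3_general :
    ∃ A : ℝ, 0 < A ∧
      ∀ (p : ℝ), 1 < p → ∀ f : ℝ → ℝ → ℝ, Measurable (Function.uncurry f) → BiPeriodic f →
        LocallyIntegrable (Function.uncurry f) → Ip p f < ⊤ →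
        (∃ (g : ℝ → ℝ → ℝ) (φ₁ φ₂ : ℝ → ℝ),
          Continuous (Function.uncurry g) ∧ BiPeriodic g ∧ MemHp2 p g ∧
          (∀ᵐ z : ℝ × ℝ, f z.1 z.2 = g z.1 z.2 + φ₁ z.1 + φ₂ z.2) ∧
          vp2 p g ≤ ENNReal.ofReal A * modulusBound p f) ∧
        ((∀ᵐ x : ℝ, ∫ t in (0 : ℝ)..1, f x t = 0) → (∀ᵐ y : ℝ, ∫ t in (0 : ℝ)..1, f t y = 0) →
          ∃ g : ℝ → ℝ → ℝ,
            Continuous (Function.uncurry g) ∧ BiPeriodic g ∧ MemHp2 p g ∧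
            (∀ᵐ z : ℝ × ℝ, f z.1 z.2 = g z.1 z.2) ∧
            vp2 p g ≤ ENNReal.ofReal A * modulusBound p f) := by
  refine ⟨65536, by norm_num, fun p hp f hfm hper hf hI ↦ ?_⟩
  have hsum := (tsum_scaleBound_lt_top hp hfm hper hI).ne
  have hcont := continuous_steklovSeries hp hfm hf hper hsum
  have hgper : BiPeriodic (steklovSeries p f) := steklovSeries_periodic hper
  have hHp := memHp2_steklovSeries hp hfm hf hper hsum
  have hvp2 := (vp2_steklovSeries_le hp hfm hf hper hsum).trans (tsum_scaleBound_le hp hfm hper)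
  refine ⟨⟨steklovSeries p f, fun x ↦ ∫ t in (0 : ℝ)..1, f x t,
    fun y ↦ (∫ s in (0 : ℝ)..1, f s y) - ∫ s in (0 : ℝ)..1, ∫ t in (0 : ℝ)..1, f s t,
    hcont, hgper, hHp, ?_, hvp2⟩, fun mean_snd mean_fst ↦
    ⟨steklovSeries p f, hcont, hgper, hHp, ?_, hvp2⟩⟩
  · filter_upwards [ae_steklovSeries_eq hp hfm hf hper hsum] with z series_eq
    rw [series_eq]
    ring
  · filter_upwards [ae_steklovSeries_eq_of_ae_mean_eq_zero hp hfm hf hper hsum mean_snd mean_fst]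
      with z series_eq using series_eq.symm

/-- If `1 < p < ∞`, `f ∈ L^p([0,1]²)` and `I_p(f) < ∞`, then there exist
a continuous `g ∈ H_p⁽²⁾` and univariate `φ₁, φ₂` with `f = g + φ₁ + φ₂` a.e. and
`v_p⁽²⁾(g) ≤ A [ω(f;1,1)_p + (1/(pp')) K_p(f) + (1/(pp'))² I_p(f)]` for an absolute
constant `A`. If moreover `f ∈ L^p_0([0,1]²)`, one may take `φ₁ = φ₂ = 0`. -/
theorem statement3 :
    ∃ A : ℝ, 0 < A ∧
      ∀ (p : ℝ), 1 < p → ∀ f : ℝ → ℝ → ℝ, MemLp2 p f → Ip p f < ⊤ →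
        (∃ (g : ℝ → ℝ → ℝ) (φ₁ φ₂ : ℝ → ℝ),
          Continuous (Function.uncurry g) ∧ BiPeriodic g ∧ MemHp2 p g ∧
          (∀ᵐ z : ℝ × ℝ ∂volume, f z.1 z.2 = g z.1 z.2 + φ₁ z.1 + φ₂ z.2) ∧
          vp2 p g ≤ ENNReal.ofReal A *
            (mixedModulus p f 1 1
              + ENNReal.ofReal (1 / (p * (p / (p - 1)))) * Kp p f
              + ENNReal.ofReal ((1 / (p * (p / (p - 1)))) ^ 2) * Ip p f)) ∧
        (MemLp20 p f →
          ∃ g : ℝ → ℝ → ℝ,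
            Continuous (Function.uncurry g) ∧ BiPeriodic g ∧ MemHp2 p g ∧
            (∀ᵐ z : ℝ × ℝ ∂volume, f z.1 z.2 = g z.1 z.2) ∧
            vp2 p g ≤ ENNReal.ofReal A *
              (mixedModulus p f 1 1
                + ENNReal.ofReal (1 / (p * (p / (p - 1)))) * Kp p f
                + ENNReal.ofReal ((1 / (p * (p / (p - 1)))) ^ 2) * Ip p f)) := by
  obtain ⟨A, hA, decomposition⟩ := statement3_general
  refine ⟨A, hA, fun p hp f hf hI ↦ ?_⟩
  obtain ⟨split, split_of_mean_zero⟩ := decomposition p hp f hf.1 hf.2.1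
    (hf.2.1.locallyIntegrable hf.1 (hf.lintegral_lt_top hp)) hI
  exact ⟨split, fun h ↦ split_of_mean_zero h.2.1 h.2.2⟩
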